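/- Let φ : S¹ → ℝ be a C^∞ function whose critical points on the circle are exactly n nondegenerate local extremum points with pairwise distinct values. Then for every integer i with 0 ≤ i ≤ n/2 + 1 there exists a marking ν of the nodes of φ such that γ((φ, ν)) = i. -/

import Mathlib

open scoped RealInnerProductSpace

noncomputable section

abbrev E2 : Type := EuclideanSpace ℝ (Fin 2)

/-- The point (cos t, sin t) on the unit circle in ℝ². -/
def sphPt (t : ℝ) : E2 := (EuclideanSpace.equiv (Fin 2) ℝ).symm ![Real.cos t, Real.sin t]

/-- A ribbon with `n` nodes, encoded via the angle parametrization `g = φ ∘ (cos, sin)`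
of a C^∞ function `φ : S¹ → ℝ` whose critical points on the circle are exactly the `n`
nondegenerate local extrema (nodes) at angles `θ 0 < θ 1 < ⋯ < θ (n-1)` in `[0, 2π)`,
with pairwise distinct critical values, together with a marking `ν` of the nodes by `±1`. -/
structure Ribbon (n : ℕ) : Type where
  g : ℝ → ℝ
  θ : Fin n → ℝ
  ν : Fin n → ℤ
  n_even : Even n
  n_pos : 0 < n
  smooth_g : ContDiff ℝ (⊤ : ℕ∞) g
  periodic_g : Function.Periodic g (2 * Real.pi)
  theta_mem : ∀ i, θ i ∈ Set.Ico (0 : ℝ) (2 * Real.pi)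
  theta_mono : StrictMono θ
  node_crit : ∀ i, deriv g (θ i) = 0
  node_nondeg : ∀ i, deriv (deriv g) (θ i) ≠ 0
  crit_only : ∀ t ∈ Set.Ico (0 : ℝ) (2 * Real.pi), deriv g t = 0 → ∃ i, t = θ i
  values_distinct : ∀ i j, g (θ i) = g (θ j) → i = j
  nu_sign : ∀ i, ν i = 1 ∨ ν i = -1

/-- The signature σ = s₊ − s₋ of a ribbon. -/
def Ribbon.sigma {n : ℕ} (a : Ribbon n) : ℤ := ∑ i, a.ν i

/-- Critical points of `f` in the open unit disk. -/
def critPts (f : E2 → ℝ) : Set E2 :=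
  {x | x ∈ Metric.ball (0 : E2) 1 ∧ fderiv ℝ f x = 0}

/-- `f : ℝ² → ℝ` is an extension of the ribbon `a`: it is C^∞, agrees with `φ` on the unit
circle, has nowhere-vanishing gradient on the circle, and at each node the radial derivative
`⟪∇f(p), p⟫` has sign `ν p` if `p` is a local maximum of `φ` (second derivative of `g`
negative there) and sign `−ν p` if `p` is a local minimum of `φ`. -/
def IsExtension {n : ℕ} (a : Ribbon n) (f : E2 → ℝ) : Prop :=
  ContDiff ℝ (⊤ : ℕ∞) f ∧
  (∀ t : ℝ, f (sphPt t) = a.g t) ∧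
  (∀ x ∈ Metric.sphere (0 : E2) 1, fderiv ℝ f x ≠ 0) ∧
  (∀ i : Fin n,
    (deriv (deriv a.g) (a.θ i) < 0 →
      0 < (a.ν i : ℝ) * ⟪gradient f (sphPt (a.θ i)), sphPt (a.θ i)⟫) ∧
    (0 < deriv (deriv a.g) (a.θ i) →
      (a.ν i : ℝ) * ⟪gradient f (sphPt (a.θ i)), sphPt (a.θ i)⟫ < 0))

/-- The ribbon invariant γ: the infimum, over all extensions `f` of `a`, of the number of
critical points of `f` in the open unit disk (a value in `ℕ∞`). -/
def gammaR {n : ℕ} (a : Ribbon n) : ℕ∞ :=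
  sInf {k : ℕ∞ | ∃ f : E2 → ℝ, IsExtension a f ∧ (critPts f).encard = k}

open scoped Topology


theorem edge_log (y κ : ℂ) (hy : ‖y‖ = 1) (γ ℓ : ℝ → ℂ) (hγ : Continuous γ) (hℓ : Continuous ℓ)
    (h1 : ∀ s, ‖γ s‖ ≤ 1) (hne : ∀ s, γ s ≠ y)
    (hexp : ∀ s, Complex.exp (ℓ s) = κ * (γ s - y)) :
    ℓ 1 - ℓ 0 = Complex.log (1 - γ 1 / y) - Complex.log (1 - γ 0 / y) := by
  have hy0 : y ≠ 0 := by intro h; simp [h] at hy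
  have hre : ∀ s, 0 < (1 - γ s / y).re := by
    intro s
    have hn : ‖γ s / y‖ ≤ 1 := by rw [norm_div, hy, div_one]; exact h1 s
    have hne1 : γ s / y ≠ 1 := by
      intro h; exact hne s ((div_eq_one_iff_eq hy0).1 h)
    have hle : (γ s / y).re ≤ 1 := (Complex.re_le_norm _).trans hn
    rcases hle.lt_or_eq with h | h
    · simp only [Complex.sub_re, Complex.one_re]; linarith
    · exfalso; apply hne1
      have hsq : (γ s / y).re ^ 2 + (γ s / y).im ^ 2 ≤ 1 := by
        have := Complex.sq_norm (γ s / y)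
        rw [Complex.normSq_apply] at this
        nlinarith [norm_nonneg (γ s / y)]
      have him : (γ s / y).im = 0 := by
        rw [h] at hsq
        have : (γ s / y).im ^ 2 ≤ 0 := by linarith
        exact pow_eq_zero_iff (two_ne_zero) |>.1 (le_antisymm this (sq_nonneg _))
      apply Complex.ext <;> simp [h, him]
  have hslit : ∀ s, (1 - γ s / y) ∈ Complex.slitPlane := fun s => Or.inl (hre s)
  have hcont : Continuous fun s => ℓ s - Complex.log (1 - γ s / y) :=
    hℓ.sub ((continuous_const.sub (hγ.div_const y)).clog hslit)
  have hconst : ∀ s, Complex.exp (ℓ s - Complex.log (1 - γ s / y)) = -(κ * y) := by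
    intro s
    have h0 : (1 - γ s / y) ≠ 0 := Complex.slitPlane_ne_zero (hslit s)
    rw [Complex.exp_sub, Complex.exp_log h0, hexp, div_eq_iff h0]
    field_simp
    ring
  have := Complex.isCoveringMap_exp.const_of_comp hcont (fun a a' => by
    apply Subtype.ext; simp only; rw [hconst, hconst]) 1 0
  linear_combination this

theorem arg_one_sub (ψ : ℝ) (h0 : 0 < ψ) (h1 : ψ < 2 * Real.pi) :
    Complex.log (1 - Complex.exp (ψ * Complex.I)) -
      Complex.log (1 - Complex.exp (-(ψ * Complex.I))) = (ψ - Real.pi) * Complex.I := by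
  have hs : 0 < Real.sin (ψ / 2) := Real.sin_pos_of_pos_of_lt_pi (by linarith) (by linarith)
  have key : (1 - Complex.exp (ψ * Complex.I)) = ((2 * Real.sin (ψ/2) : ℝ) : ℂ) *
      (Complex.cos (((ψ - Real.pi)/2 : ℝ)) + Complex.sin (((ψ - Real.pi)/2 : ℝ)) * Complex.I) := by
    have e1 : Real.cos ((ψ - Real.pi)/2) = Real.sin (ψ/2) := by
      rw [← Real.cos_pi_div_two_sub, ← Real.cos_neg]; congr 1; ring
    have e2 : Real.sin ((ψ - Real.pi)/2) = - Real.cos (ψ/2) := by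
      rw [← Real.sin_pi_div_two_sub, ← Real.sin_neg]; congr 1; ring
    rw [Complex.exp_mul_I, ← Complex.ofReal_cos, ← Complex.ofReal_sin, ← Complex.ofReal_cos,
      ← Complex.ofReal_sin, e1, e2]
    have c1 : Real.cos ψ = 1 - 2 * Real.sin (ψ/2)^2 := by
      have := Real.cos_two_mul (ψ/2)
      have h2 := Real.sin_sq_add_cos_sq (ψ/2)
      rw [show 2 * (ψ/2) = ψ by ring] at this
      linarith
    have c2 : Real.sin ψ = 2 * Real.sin (ψ/2) * Real.cos (ψ/2) := by
      rw [← Real.sin_two_mul]; congr 1; ring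
    rw [c1, c2]; push_cast; ring
  have harg : Complex.arg (1 - Complex.exp (ψ * Complex.I)) = (ψ - Real.pi)/2 := by
    rw [key]
    exact Complex.arg_mul_cos_add_sin_mul_I (by positivity) ⟨by linarith, by linarith⟩
  have hconj : (1 - Complex.exp (-(ψ * Complex.I))) =
      (starRingEnd ℂ) (1 - Complex.exp (ψ * Complex.I)) := by
    rw [map_sub, map_one, ← Complex.exp_conj]; simp
  have hpi : Complex.arg (1 - Complex.exp (ψ * Complex.I)) ≠ Real.pi := by
    rw [harg]; intro h; linarith [Real.pi_pos]
  rw [hconj, Complex.log_conj _ hpi]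
  apply Complex.ext
  · simp
  · simp [Complex.log_im, harg]

theorem crossing (α θ β ζ : ℝ) (h1 : α < θ) (h2 : θ < β) (h3 : β < ζ) (h4 : ζ < α + 2 * Real.pi)
    (γ₁ γ₂ : ℝ → ℂ) (c1 : Continuous γ₁) (c2 : Continuous γ₂)
    (n1 : ∀ s, ‖γ₁ s‖ ≤ 1) (n2 : ∀ s, ‖γ₂ s‖ ≤ 1)
    (ha : γ₁ 0 = Complex.exp (α * Complex.I)) (hb : γ₁ 1 = Complex.exp (β * Complex.I))
    (hq : γ₂ 0 = Complex.exp (θ * Complex.I)) (hz : γ₂ 1 = Complex.exp (ζ * Complex.I)) :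
    ∃ s t, γ₁ s = γ₂ t := by
  by_contra! hne
  obtain ⟨F, hFc, hF⟩ := Complex.exists_continuousOn_eqOn_exp_comp (X := ℝ × ℝ) (U := Set.univ)
    (by
      have : SimplyConnectedSpace (Set.univ : Set (ℝ × ℝ)) := by
        have : ContractibleSpace (Set.univ : Set (ℝ × ℝ)) :=
          convex_univ.contractibleSpace ⟨0, trivial⟩
        infer_instance
      exact this) isOpen_univ
    (g := fun p => γ₁ p.1 - γ₂ p.2) (by fun_prop)
    (by rintro ⟨p, -, hp⟩; exact hne p.1 p.2 (sub_eq_zero.1 hp))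
  rw [← continuousOn_univ.symm] at hFc
  have hFe : ∀ s t, Complex.exp (F (s, t)) = γ₁ s - γ₂ t := fun s t => hF (Set.mem_univ (s, t))
  have nrm : ∀ x : ℝ, ‖Complex.exp (x * Complex.I)‖ = 1 := Complex.norm_exp_ofReal_mul_I
  have E1 := edge_log (γ₂ 0) 1 (by rw [hq]; exact nrm _) γ₁ (fun s => F (s, 0)) c1
    (by fun_prop) n1 (fun s => hne s 0) (fun s => by rw [hFe]; ring)
  have E2 := edge_log (γ₂ 1) 1 (by rw [hz]; exact nrm _) γ₁ (fun s => F (s, 1)) c1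
    (by fun_prop) n1 (fun s => hne s 1) (fun s => by rw [hFe]; ring)
  have E3 := edge_log (γ₁ 0) (-1) (by rw [ha]; exact nrm _) γ₂ (fun s => F (0, s)) c2
    (by fun_prop) n2 (fun s => (hne 0 s).symm) (fun s => by rw [hFe]; ring)
  have E4 := edge_log (γ₁ 1) (-1) (by rw [hb]; exact nrm _) γ₂ (fun s => F (1, s)) c2
    (by fun_prop) n2 (fun s => (hne 1 s).symm) (fun s => by rw [hFe]; ring)
  simp only [ha, hb, hq, hz, ← Complex.exp_sub] at E1 E2 E3 E4
  have A1 := arg_one_sub (β - θ) (by linarith) (by linarith)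
  have A2 := arg_one_sub (θ - α) (by linarith) (by linarith)
  have A3 := arg_one_sub (ζ - β) (by linarith) (by linarith)
  have A4 := arg_one_sub (ζ - α) (by linarith) (by linarith)
  push_cast at A1 A2 A3 A4
  have r : ∀ x y : ℝ, (((x : ℂ) - y) * Complex.I) = x * Complex.I - y * Complex.I := by
    intros; ring
  have r' : ∀ x y : ℂ, -(x - y) = y - x := by intros; ring
  simp only [r, r'] at A1 A2 A3 A4
  have fin : (2 * Real.pi : ℂ) * Complex.I = 0 := by
    linear_combination E1 - E2 - E3 + E4 + A1 + A2 + A3 - A4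
  simp [Real.pi_ne_zero] at fin


theorem sphPt_zero (t : ℝ) : sphPt t 0 = Real.cos t := rfl
theorem sphPt_one (t : ℝ) : sphPt t 1 = Real.sin t := rfl

theorem norm_sphPt (t : ℝ) : ‖sphPt t‖ = 1 := by
  rw [EuclideanSpace.norm_eq, Fin.sum_univ_two, sphPt_zero, sphPt_one]
  simp

theorem contDiff_sphPt : ContDiff ℝ (⊤ : ℕ∞) sphPt := by
  rw [contDiff_euclidean]
  intro i
  fin_cases i
  · exact Real.contDiff_cos
  · exact Real.contDiff_sin

theorem continuous_sphPt : Continuous sphPt := contDiff_sphPt.continuous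

theorem sphPt_add_int (t : ℝ) (m : ℤ) : sphPt (t + m * (2 * Real.pi)) = sphPt t := by
  ext i
  fin_cases i
  · exact Real.cos_add_int_mul_two_pi t m
  · exact Real.sin_add_int_mul_two_pi t m

def toC (x : E2) : ℂ := ⟨x 0, x 1⟩

theorem continuous_toC : Continuous toC := by
  have : toC = fun x : E2 => ((x 0 : ℝ) : ℂ) + (x 1 : ℝ) * Complex.I := by
    funext x; apply Complex.ext <;> simp [toC]
  rw [this]; fun_prop

theorem norm_toC (x : E2) : ‖toC x‖ = ‖x‖ := by
  rw [EuclideanSpace.norm_eq, Fin.sum_univ_two, Complex.norm_def, Complex.normSq_apply]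
  simp [toC, sq]

theorem toC_inj {x y : E2} (h : toC x = toC y) : x = y := by
  ext i
  fin_cases i
  · exact congrArg Complex.re h
  · exact congrArg Complex.im h

theorem toC_sphPt (t : ℝ) : toC (sphPt t) = Complex.exp (t * Complex.I) := by
  rw [Complex.exp_mul_I]
  apply Complex.ext <;> simp [toC, sphPt_zero, sphPt_one, ← Complex.ofReal_cos, ← Complex.ofReal_sin]

theorem polar (x : E2) : x = ‖x‖ • sphPt (Complex.arg (toC x)) := by
  apply toC_inj
  have h : toC (‖x‖ • sphPt (Complex.arg (toC x))) = (‖x‖ : ℂ) * toC (sphPt (Complex.arg (toC x))) := by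
    apply Complex.ext <;> simp [toC]
  rw [h, toC_sphPt, ← norm_toC, Complex.norm_mul_exp_arg_mul_I]

/-- angle in any window of length 2π -/
theorem exists_angle (x : E2) (a : ℝ) : ∃ t ∈ Set.Ico a (a + 2 * Real.pi), x = ‖x‖ • sphPt t := by
  obtain ⟨y, hy, m, hm⟩ : ∃ y ∈ Set.Ico a (a + 2 * Real.pi), ∃ m : ℤ,
      y = Complex.arg (toC x) + m * (2 * Real.pi) := by
    refine ⟨toIcoMod Real.two_pi_pos a (Complex.arg (toC x)), toIcoMod_mem_Ico _ _ _,
      -toIcoDiv Real.two_pi_pos a (Complex.arg (toC x)), ?_⟩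
    have := toIcoMod_add_toIcoDiv_zsmul Real.two_pi_pos a (Complex.arg (toC x))
    rw [zsmul_eq_mul] at this
    push_cast
    linarith
  refine ⟨y, hy, ?_⟩
  rw [hm, sphPt_add_int]
  exact polar x

theorem cross_joined (S1 S2 : Set E2) (hS1 : S1 ⊆ Metric.closedBall 0 1)
    (hS2 : S2 ⊆ Metric.closedBall 0 1) (α θ β ζ : ℝ) (h1 : α < θ) (h2 : θ < β) (h3 : β < ζ)
    (h4 : ζ < α + 2 * Real.pi) (j1 : JoinedIn S1 (sphPt α) (sphPt β))
    (j2 : JoinedIn S2 (sphPt θ) (sphPt ζ)) : (S1 ∩ S2).Nonempty := by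
  obtain ⟨p1, hp1⟩ := j1
  obtain ⟨p2, hp2⟩ := j2
  have m1 : ∀ s, p1.extend s ∈ S1 := fun s => by
    have : p1.extend s ∈ Set.range p1 := by rw [← Path.extend_range]; exact ⟨s, rfl⟩
    obtain ⟨u, hu⟩ := this; rw [← hu]; exact hp1 u
  have m2 : ∀ s, p2.extend s ∈ S2 := fun s => by
    have : p2.extend s ∈ Set.range p2 := by rw [← Path.extend_range]; exact ⟨s, rfl⟩
    obtain ⟨u, hu⟩ := this; rw [← hu]; exact hp2 u
  obtain ⟨s, t, hst⟩ := crossing α θ β ζ h1 h2 h3 h4 (fun s => toC (p1.extend s))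
    (fun s => toC (p2.extend s)) (continuous_toC.comp p1.continuous_extend)
    (continuous_toC.comp p2.continuous_extend)
    (fun s => by rw [norm_toC]; simpa using hS1 (m1 s))
    (fun s => by rw [norm_toC]; simpa using hS2 (m2 s))
    (by simp [toC_sphPt]) (by simp [toC_sphPt]) (by simp [toC_sphPt]) (by simp [toC_sphPt])
  exact ⟨p1.extend s, m1 s, by rw [toC_inj hst]; exact m2 t⟩

theorem joined_nhds (f : E2 → ℝ) (hf : Continuous f) (c : ℝ) (y : E2)
    (hyc : c < f y) (hy : y ∈ Metric.closedBall (0 : E2) 1) :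
    ∀ᶠ z in 𝓝[Metric.closedBall (0 : E2) 1] y,
      JoinedIn {y ∈ Metric.closedBall (0 : E2) 1 | c < f y} y z := by
  have : ∀ᶠ z in 𝓝 y, c < f z := hf.continuousAt.eventually (lt_mem_nhds hyc)
  obtain ⟨ε, hε, hb⟩ := Metric.eventually_nhds_iff_ball.1 this
  filter_upwards [self_mem_nhdsWithin, mem_nhdsWithin_of_mem_nhds (Metric.ball_mem_nhds y hε)]
    with z hz hzb
  apply JoinedIn.of_segment_subset
  intro w hw
  exact ⟨(convex_closedBall 0 1).segment_subset hy hz hw,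
    hb w ((convex_ball y ε).segment_subset (Metric.mem_ball_self hε) hzb hw)⟩

theorem comp_max (f : E2 → ℝ) (hf : Continuous f) (c : ℝ) (x : E2)
    (hxc : c < f x) (hx : x ∈ Metric.closedBall (0 : E2) 1) :
    ∃ m, JoinedIn {y ∈ Metric.closedBall (0 : E2) 1 | c < f y} x m ∧
      ∀ᶠ y in 𝓝[Metric.closedBall (0 : E2) 1] m, f y ≤ f m := by
  set S := {y ∈ Metric.closedBall (0 : E2) 1 | c < f y} with hS
  have hsub : {y | JoinedIn S x y} ⊆ Metric.closedBall (0 : E2) 1 := fun y hy => hy.target_mem.1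
  have hcl : closure {y | JoinedIn S x y} ⊆ Metric.closedBall (0 : E2) 1 :=
    closure_minimal hsub Metric.isClosed_closedBall
  have hK : IsCompact (closure {y | JoinedIn S x y}) :=
    (isCompact_closedBall (0 : E2) 1).of_isClosed_subset isClosed_closure hcl
  have hxS : JoinedIn S x x := JoinedIn.refl ⟨hx, hxc⟩
  obtain ⟨m, hm, hmax⟩ := hK.exists_isMaxOn ⟨x, subset_closure hxS⟩ hf.continuousOn
  have hmD := hcl hm
  have hmc : c < f m := hxc.trans_le (hmax (subset_closure hxS))
  have hn := joined_nhds f hf c m hmc hmD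
  have hxm : JoinedIn S x m := by
    have hn' := eventually_nhdsWithin_iff.1 hn
    obtain ⟨y, hy1, hy2⟩ := mem_closure_iff_nhds.1 hm _ hn'
    exact hy2.trans (hy1 (hsub hy2)).symm
  refine ⟨m, hxm, ?_⟩
  filter_upwards [hn] with y hy
  exact hmax (subset_closure (hxm.trans hy))

theorem elder {X ι : Type*} (M : Finset X) (Λ : Finset ι) (v : ι → ℝ)
    (hv : ∀ i ∈ Λ, ∀ j ∈ Λ, v i = v j → i = j) (A B : ι → Set X) (hM : M.Nonempty)
    (hA : ∀ j ∈ Λ, ∃ x ∈ M, x ∈ A j) (hB : ∀ j ∈ Λ, ∃ x ∈ M, x ∈ B j)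
    (hdisj : ∀ j ∈ Λ, ∀ x, x ∈ A j → x ∈ B j → False)
    (nest : ∀ i ∈ Λ, ∀ j ∈ Λ, v j < v i → ∀ x ∈ A i ∪ B i,
      (x ∈ A j → A i ∪ B i ⊆ A j) ∧ (x ∈ B j → A i ∪ B i ⊆ B j)) :
    Λ.card + 1 ≤ M.card := by
  classical
  obtain ⟨h, hh⟩ : ∃ h : X → ℕ, Set.InjOn h M := by
    have := M.finite_toSet.countable
    exact Set.countable_iff_exists_injOn.1 this
  have hmaxx : ∀ P : Set X, (∃ x ∈ M, x ∈ P) → ∃ x ∈ M, x ∈ P ∧ ∀ y ∈ M, y ∈ P → h y ≤ h x := by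
    intro P ⟨x, hx, hxP⟩
    obtain ⟨z, hz, hz'⟩ := (M.filter (· ∈ P)).exists_max_image h ⟨x, by simp [hx, hxP]⟩
    simp only [Finset.mem_filter] at hz hz'
    exact ⟨z, hz.1, hz.2, fun y hy hyP => hz' y ⟨hy, hyP⟩⟩
  have key : ∀ j ∈ Λ, ∃ lo ∈ M, ∃ hi ∈ M, h lo < h hi ∧ hi ∈ A j ∪ B j ∧ lo ∈ A j ∪ B j ∧
      ∃ P : Set X, (P = A j ∨ P = B j) ∧ lo ∈ P ∧ ∀ y ∈ M, y ∈ P → h y ≤ h lo := by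
    intro j hj
    obtain ⟨s, hs, hsA, hs'⟩ := hmaxx _ (hA j hj)
    obtain ⟨t, ht, htB, ht'⟩ := hmaxx _ (hB j hj)
    rcases lt_trichotomy (h s) (h t) with hlt | heq | hlt
    · exact ⟨s, hs, t, ht, hlt, Or.inr htB, Or.inl hsA, A j, Or.inl rfl, hsA, hs'⟩
    · have := hh hs ht heq
      subst this
      exact (hdisj j hj _ hsA htB).elim
    · exact ⟨t, ht, s, hs, hlt, Or.inl hsA, Or.inr htB, B j, Or.inr rfl, htB, ht'⟩
  haveI : Nonempty X := ⟨hM.choose⟩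
  choose! lo hlo hi hhi hlt hiU loU P hP loP hPmax using key
  obtain ⟨top, htop, htop'⟩ := M.exists_max_image h hM
  have hinj : ∀ i ∈ Λ, ∀ j ∈ Λ, v j < v i → lo i ≠ lo j := by
    intro i hi' j hj hvij heq
    have hx : lo i ∈ P j := heq ▸ loP j hj
    have hsub : A i ∪ B i ⊆ P j := by
      rcases hP j hj with h1 | h1 <;> rw [h1] at hx ⊢
      · exact (nest i hi' j hj hvij _ (loU i hi')).1 hx
      · exact (nest i hi' j hj hvij _ (loU i hi')).2 hx
    have := hPmax j hj (hi i) (hhi i hi') (hsub (hiU i hi'))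
    have h2 := hlt i hi'
    rw [heq] at h2
    omega
  have : Λ.card ≤ (M.erase top).card := by
    apply Finset.card_le_card_of_injOn lo
    · intro j hj
      simp only [Finset.coe_erase, Set.mem_diff, Finset.mem_coe, Set.mem_singleton_iff]
      refine ⟨hlo j hj, fun he => ?_⟩
      have h1 := hlt j hj
      have h2 := htop' _ (hhi j hj)
      rw [he] at h1
      omega
    · intro i hi' j hj heq
      by_contra hne
      rcases lt_trichotomy (v i) (v j) with h1 | h1 | h1
      · exact hinj j hj i hi' h1 heq.symm
      · exact hne (hv i hi' j hj h1)
      · exact hinj i hi' j hj h1 heq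
  rw [Finset.card_erase_of_mem htop] at this
  have := Finset.card_pos.2 hM
  omega


theorem local_sign (h : ℝ → ℝ) (hh : ContDiff ℝ (⊤ : ℕ∞) h) (τ : ℝ) (h1 : deriv h τ = 0)
    (h2 : 0 < deriv (deriv h) τ) :
    ∃ δ, 0 < δ ∧ δ < 1 ∧ ∀ t, |t - τ| ≤ δ → t ≠ τ → 0 < deriv h t * (t - τ) ∧ h τ < h t := by
  have ev := eventually_nhdsWithin_sign_eq_of_deriv_pos h2 h1
  obtain ⟨ε, hε, hb⟩ := Metric.eventually_nhds_iff.1 ev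
  have key : ∀ t, |t - τ| < ε → t ≠ τ → 0 < deriv h t * (t - τ) := by
    intro t ht hne
    have hs := hb (y := t) (by rwa [Real.dist_eq])
    rcases lt_or_gt_of_ne hne with hl | hl
    · have : t - τ < 0 := by linarith
      rw [sign_neg this, sign_eq_neg_one_iff] at hs
      exact mul_pos_of_neg_of_neg hs this
    · have : 0 < t - τ := by linarith
      rw [sign_pos this, sign_eq_one_iff] at hs
      exact mul_pos hs this
  refine ⟨min (ε/2) (1/2), by positivity, by linarith [min_le_right (ε/2) (1/2:ℝ)], ?_⟩
  intro t ht hne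
  have ht' : |t - τ| < ε := by linarith [min_le_left (ε/2) (1/2:ℝ)]
  refine ⟨key t ht' hne, ?_⟩
  rcases lt_or_gt_of_ne hne with hl | hl
  · have : StrictAntiOn h (Set.Icc t τ) := by
      apply strictAntiOn_of_deriv_neg (convex_Icc _ _) hh.continuous.continuousOn
      intro x hx
      rw [interior_Icc] at hx
      rw [abs_of_neg (by linarith)] at ht'
      have := key x (by rw [abs_of_neg (by linarith [hx.2])]; linarith [hx.1]) hx.2.ne
      by_contra hcon
      nlinarith [hx.2]
    exact this ⟨le_rfl, hl.le⟩ ⟨hl.le, le_rfl⟩ hl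
  · have : StrictMonoOn h (Set.Icc τ t) := by
      apply strictMonoOn_of_deriv_pos (convex_Icc _ _) hh.continuous.continuousOn
      intro x hx
      rw [interior_Icc] at hx
      rw [abs_of_pos (by linarith)] at ht'
      have := key x (by rw [abs_of_pos (by linarith [hx.1])]; linarith [hx.2]) hx.1.ne'
      by_contra hcon
      nlinarith [hx.1]
    exact this ⟨le_rfl, hl.le⟩ ⟨hl.le, le_rfl⟩ hl

theorem inner_grad (f : E2 → ℝ) (x p : E2) : ⟪gradient f x, p⟫ = fderiv ℝ f x p := by
  rw [← toDual_gradient]; rfl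

theorem radial_hasDerivAt (f : E2 → ℝ) (hf : ContDiff ℝ (⊤ : ℕ∞) f) (p : E2) (r : ℝ) :
    HasDerivAt (fun r : ℝ => f (r • p)) (fderiv ℝ f (r • p) p) r := by
  have h1 : HasFDerivAt f (fderiv ℝ f (r • p)) (r • p) :=
    (hf.differentiable (by simp)).differentiableAt.hasFDerivAt
  have h2 : HasDerivAt (fun r : ℝ => r • p) p r := by
    simpa using (hasDerivAt_id r).smul_const p
  exact h1.comp_hasDerivAt r h2

/-- if radial derivative is positive at p, then f is smaller just inside -/
theorem inward_lt (f : E2 → ℝ) (hf : ContDiff ℝ (⊤ : ℕ∞) f) (p : E2)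
    (hp : 0 < ⟪gradient f p, p⟫) :
    ∃ s : ℝ, 0 < s ∧ s < 1 ∧ ∀ r : ℝ, s ≤ r → r < 1 → f (r • p) < f p := by
  rw [inner_grad] at hp
  have h := radial_hasDerivAt f hf p 1
  rw [one_smul] at h
  have ht := hasDerivAt_iff_tendsto_slope.1 h
  have ev : ∀ᶠ r in 𝓝[≠] (1:ℝ), 0 < slope (fun r : ℝ => f (r • p)) 1 r :=
    ht.eventually (lt_mem_nhds hp)
  rw [eventually_nhdsWithin_iff, Metric.eventually_nhds_iff] at ev
  obtain ⟨ε, hε, hb⟩ := ev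
  refine ⟨max (1/2) (1 - ε/2), by positivity, max_lt (by norm_num) (by linarith), ?_⟩
  intro r hr hr1
  have h1 : 1 - ε/2 ≤ r := (le_max_right _ _).trans hr
  have := hb (y := r) (by rw [Real.dist_eq, abs_of_neg (by linarith)]; linarith) (by simpa using hr1.ne)
  rw [slope_def_field, one_smul] at this
  by_contra hcon
  push Not at hcon
  have h3 : (f (r • p) - f p) / (r - 1) ≤ 0 :=
    div_nonpos_of_nonneg_of_nonpos (by linarith) (by linarith)
  linarith

theorem no_both (h : ℝ → ℝ) (τ : ℝ) (h1 : IsLocalMax h τ) (h2 : IsLocalMin h τ) :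
    deriv (deriv h) τ = 0 := by
  have : h =ᶠ[𝓝 τ] fun _ => h τ := by
    filter_upwards [h1, h2] with t a b
    exact le_antisymm a b
  have h3 := this.deriv.deriv_eq
  rw [h3]; simp

theorem interior_max {n : ℕ} (b : Ribbon n)
    (hmax : ∀ i, deriv (deriv b.g) (b.θ i) < 0 → b.ν i = -1) (f : E2 → ℝ) (hf : IsExtension b f)
    (m : E2) (hm : m ∈ Metric.closedBall (0 : E2) 1)
    (hev : ∀ᶠ y in 𝓝[Metric.closedBall (0 : E2) 1] m, f y ≤ f m) :
    m ∈ Metric.ball (0 : E2) 1 := by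
  by_contra hcon
  simp only [Metric.mem_closedBall, dist_zero_right, Metric.mem_ball, not_lt] at hm hcon
  have hn : ‖m‖ = 1 := le_antisymm hm hcon
  obtain ⟨t, ht, hmt⟩ := exists_angle m 0
  rw [hn, one_smul] at hmt
  rw [zero_add] at ht
  have hloc : IsLocalMax b.g t := by
    have hten : Filter.Tendsto sphPt (𝓝 t) (𝓝[Metric.closedBall (0 : E2) 1] m) := by
      rw [hmt]
      apply tendsto_nhdsWithin_iff.2
      exact ⟨continuous_sphPt.continuousAt, Filter.Eventually.of_forall fun s => by
        simp [norm_sphPt]⟩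
    filter_upwards [hten.eventually hev] with s hs
    rw [hmt, hf.2.1, hf.2.1] at hs
    exact hs
  obtain ⟨i, hi⟩ := b.crit_only t ht hloc.deriv_eq_zero
  subst hi
  have hneg : deriv (deriv b.g) (b.θ i) < 0 := by
    rcases lt_or_gt_of_ne (b.node_nondeg i) with h | h
    · exact h
    · exact (b.node_nondeg i (no_both _ _ hloc
        (isLocalMin_of_deriv_deriv_pos h (b.node_crit i) b.smooth_g.continuous.continuousAt))).elim
  have hr := (hf.2.2.2 i).1 hneg
  rw [hmax i hneg] at hr
  push_cast at hr
  obtain ⟨s, hs0, hs1, hs⟩ := inward_lt (fun x => - f x) hf.1.neg (sphPt (b.θ i)) (by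
    rw [inner_grad] at hr ⊢
    simp only [fderiv_fun_neg, neg_apply]
    linarith)
  have hten : Filter.Tendsto (fun r : ℝ => r • sphPt (b.θ i)) (𝓝[<] 1)
      (𝓝[Metric.closedBall (0 : E2) 1] m) := by
    rw [hmt]
    apply tendsto_nhdsWithin_iff.2
    constructor
    · have : ContinuousAt (fun r : ℝ => r • sphPt (b.θ i)) 1 := by fun_prop
      have := this.tendsto
      rw [one_smul] at this
      exact this.mono_left nhdsWithin_le_nhds
    · filter_upwards [Ioo_mem_nhdsLT (show (0:ℝ) < 1 by norm_num)] with r hr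
      simp [norm_smul, norm_sphPt, abs_of_pos hr.1, hr.2.le]
  have hh := (hten.eventually hev).and (Ioo_mem_nhdsLT hs1)
  obtain ⟨r, hr1, hr2⟩ := hh.exists
  have := hs r hr2.1.le hr2.2
  rw [hmt] at hr1
  linarith

theorem lower {n : ℕ} (b : Ribbon n) (T : Finset (Fin n))
    (hmax : ∀ i, deriv (deriv b.g) (b.θ i) < 0 → b.ν i = -1)
    (hT : ∀ i ∈ T, 0 < deriv (deriv b.g) (b.θ i) ∧ b.ν i = -1)
    (f : E2 → ℝ) (hf : IsExtension b f) : ((T.card + 1 : ℕ) : ℕ∞) ≤ (critPts f).encard := by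
  classical
  by_cases hfin : (critPts f).Finite
  swap
  · rw [Set.Infinite.encard_eq hfin]; exact le_top
  have hcf : Continuous f := hf.1.continuous
  set D := Metric.closedBall (0 : E2) 1 with hD
  set S : ℝ → Set E2 := fun c => {y ∈ D | c < f y} with hS
  set W : ℝ → Set E2 := fun c => {y ∈ D | f y < c} with hW
  set v : Fin n → ℝ := fun j => b.g (b.θ j) with hv
  have hvinj : ∀ i j, v i = v j → i = j := fun i j h => b.values_distinct i j h
  have hsphD : ∀ t, sphPt t ∈ D := fun t => by simp [hD, norm_sphPt]
  -- local data at the nodes of T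
  have hloc : ∀ j ∈ T, ∃ δ, 0 < δ ∧ δ < 1 ∧
      ∀ t, |t - b.θ j| ≤ δ → t ≠ b.θ j → b.g (b.θ j) < b.g t := by
    intro j hj
    obtain ⟨δ, h0, h1, h2⟩ := local_sign b.g b.smooth_g (b.θ j) (b.node_crit j) (hT j hj).1
    exact ⟨δ, h0, h1, fun t ht hne => (h2 t ht hne).2⟩
  choose! δ hδ0 hδ1 hδ using hloc
  have hin : ∀ j ∈ T, ∃ s : ℝ, 0 < s ∧ s < 1 ∧ ∀ r : ℝ, s ≤ r → r < 1 →
      f (r • sphPt (b.θ j)) < v j := by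
    intro j hj
    have h1 := (hf.2.2.2 j).2 (hT j hj).1
    rw [(hT j hj).2] at h1
    push_cast at h1
    have := inward_lt f hf.1 (sphPt (b.θ j)) (by linarith)
    rw [hf.2.1] at this
    exact this
  choose! s hs0 hs1 hs using hin
  set A : Fin n → E2 := fun j => sphPt (b.θ j - δ j) with hA
  set B : Fin n → E2 := fun j => sphPt (b.θ j + δ j) with hB
  set w : Fin n → E2 := fun j => s j • sphPt (b.θ j) with hw
  have hAS : ∀ j ∈ T, v j < f (A j) := by
    intro j hj
    rw [hA, hf.2.1]
    exact hδ j hj _ (by simp [abs_of_pos (hδ0 j hj)]) (by linarith [hδ0 j hj])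
  have hBS : ∀ j ∈ T, v j < f (B j) := by
    intro j hj
    rw [hB, hf.2.1]
    exact hδ j hj _ (by simp [abs_of_pos (hδ0 j hj)]) (by linarith [hδ0 j hj])
  have harc : ∀ j ∈ T, ∀ c, c < v j → JoinedIn (S c) (A j) (B j) := by
    intro j hj c hc
    have hpc : IsPathConnected (Set.Icc (b.θ j - δ j) (b.θ j + δ j)) :=
      (convex_Icc _ _).isPathConnected ⟨b.θ j, by constructor <;> linarith [hδ0 j hj]⟩
    have hj' := (hpc.image continuous_sphPt).joinedIn (A j)
      ⟨_, ⟨le_rfl, by linarith [hδ0 j hj]⟩, rfl⟩ (B j) ⟨_, ⟨by linarith [hδ0 j hj], le_rfl⟩, rfl⟩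
    apply hj'.mono
    rintro _ ⟨t, ht, rfl⟩
    refine ⟨hsphD t, ?_⟩
    rw [hf.2.1]
    by_cases h : t = b.θ j
    · rw [h]; exact hc
    · exact hc.trans (hδ j hj t (abs_le.2 ⟨by linarith [ht.1], by linarith [ht.2]⟩) h)
  have hSmono : ∀ c c', c ≤ c' → S c' ⊆ S c := fun c c' h y hy => ⟨hy.1, h.trans_lt hy.2⟩
  have hWmono : ∀ c c', c ≤ c' → W c ⊆ W c' := fun c c' h y hy => ⟨hy.1, hy.2.trans_le h⟩
  set Λ := T.filter (fun j => ¬ JoinedIn (S (v j)) (A j) (B j)) with hΛ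
  -- local maxima
  set M := hfin.toFinset.filter (fun x => IsLocalMax f x) with hM
  have hmaxM : ∀ c x, x ∈ S c → ∃ m ∈ M, JoinedIn (S c) x m := by
    intro c x hx
    obtain ⟨m, hm1, hm2⟩ := comp_max f hcf c x hx.2 hx.1
    have hmb := interior_max b hmax f hf m hm1.target_mem.1 hm2
    have hlm : IsLocalMax f m := by
      have : 𝓝[D] m = 𝓝 m := nhdsWithin_eq_nhds.2
        (Filter.mem_of_superset (Metric.isOpen_ball.mem_nhds hmb) Metric.ball_subset_closedBall)
      rw [this] at hm2
      exact hm2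
    exact ⟨m, by simp [hM, critPts, hlm, hlm.fderiv_eq_zero]; simpa using hmb, hm1⟩
  have hMne : M.Nonempty := by
    obtain ⟨m, hm, -⟩ := hmaxM (f 0 - 1) 0 ⟨by simp [hD], by linarith⟩
    exact ⟨m, hm⟩
  have hcard1 : Λ.card + 1 ≤ M.card := by
    apply elder M Λ v (fun i _ j _ h => hvinj i j h) (fun j => {y | JoinedIn (S (v j)) (A j) y})
      (fun j => {y | JoinedIn (S (v j)) (B j) y}) hMne
    · intro j hj
      have hjT := (Finset.mem_filter.1 hj).1
      obtain ⟨m, h1, h2⟩ := hmaxM (v j) (A j) ⟨hsphD _, hAS j hjT⟩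
      exact ⟨m, h1, h2⟩
    · intro j hj
      have hjT := (Finset.mem_filter.1 hj).1
      obtain ⟨m, h1, h2⟩ := hmaxM (v j) (B j) ⟨hsphD _, hBS j hjT⟩
      exact ⟨m, h1, h2⟩
    · intro j hj x hxA hxB
      exact (Finset.mem_filter.1 hj).2 (JoinedIn.trans hxA (JoinedIn.symm hxB))
    · intro i hi j hj hvij x hx
      have hiT := (Finset.mem_filter.1 hi).1
      have hab := harc i hiT (v j) hvij
      have hsub := hSmono _ _ hvij.le
      have hAx : JoinedIn (S (v j)) (A i) x := by
        rcases hx with hx | hx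
        · exact JoinedIn.mono hx hsub
        · exact hab.trans (JoinedIn.mono hx hsub)
      have hAy : ∀ y ∈ {y | JoinedIn (S (v i)) (A i) y} ∪ {y | JoinedIn (S (v i)) (B i) y},
          JoinedIn (S (v j)) (A i) y := by
        intro y hy
        rcases hy with hy | hy
        · exact JoinedIn.mono hy hsub
        · exact hab.trans (JoinedIn.mono hy hsub)
      exact ⟨fun h y hy => JoinedIn.trans h (hAx.symm.trans (hAy y hy)),
        fun h y hy => JoinedIn.trans h (hAx.symm.trans (hAy y hy))⟩
  -- trapped minima
  have hwW : ∀ j ∈ T, w j ∈ W (v j) := by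
    intro j hj
    refine ⟨?_, hs j hj _ le_rfl (hs1 j hj)⟩
    simp [hD, hw, norm_smul, norm_sphPt, abs_of_pos (hs0 j hj), (hs1 j hj).le]
  have hseg : ∀ j ∈ T, JoinedIn (insert (sphPt (b.θ j)) (W (v j))) (sphPt (b.θ j)) (w j) := by
    intro j hj
    have hpc : IsPathConnected (Set.Icc (s j) 1) :=
      (convex_Icc _ _).isPathConnected ⟨1, (hs1 j hj).le, le_rfl⟩
    have hcont : Continuous fun r : ℝ => r • sphPt (b.θ j) := by fun_prop
    have hj' := (hpc.image hcont).joinedIn (sphPt (b.θ j))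
      ⟨1, ⟨(hs1 j hj).le, le_rfl⟩, one_smul _ _⟩ (w j) ⟨_, ⟨le_rfl, (hs1 j hj).le⟩, rfl⟩
    apply hj'.mono
    rintro _ ⟨r, hr, rfl⟩
    rcases hr.2.lt_or_eq with h | h
    · right
      refine ⟨?_, hs j hj r hr.1 h⟩
      have : 0 < r := (hs0 j hj).trans_le hr.1
      simp [hD, norm_smul, norm_sphPt, abs_of_pos this, hr.2]
    · left; simp [h]
  have htrap : ∀ j ∈ T, j ∉ Λ → ∀ y, JoinedIn (W (v j)) (w j) y → y ∈ Metric.ball (0 : E2) 1 := by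
    intro j hj hjΛ y hy
    by_contra hcon
    have hyW := hy.target_mem
    have hn : ‖y‖ = 1 := by
      have h1 := hyW.1
      simp only [hD, Metric.mem_closedBall, dist_zero_right, Metric.mem_ball, not_lt] at h1 hcon
      exact le_antisymm h1 hcon
    obtain ⟨ζ, hζ, hyζ⟩ := exists_angle y (b.θ j - δ j)
    rw [hn, one_smul] at hyζ
    have hfy : b.g ζ < v j := by rw [← hf.2.1, ← hyζ]; exact hyW.2
    have hζβ : b.θ j + δ j < ζ := by
      by_contra hle
      push Not at hle
      by_cases h : ζ = b.θ j
      · rw [h] at hfy; exact lt_irrefl _ hfy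
      · have := hδ j hj ζ (abs_le.2 ⟨by linarith [hζ.1], by linarith⟩) h
        exact lt_asymm this hfy
    have hAB : JoinedIn (S (v j)) (A j) (B j) := by
      by_contra hno
      exact hjΛ (Finset.mem_filter.2 ⟨hj, hno⟩)
    have hq : JoinedIn (insert (sphPt (b.θ j)) (W (v j))) (sphPt (b.θ j)) (sphPt ζ) := by
      rw [← hyζ]
      exact (hseg j hj).trans (hy.mono (Set.subset_insert _ _))
    obtain ⟨x, hx1, hx2⟩ := cross_joined _ _ (fun x hx => hx.1)
      (by
        intro x hx
        rcases hx with hx | hx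
        · rw [hx]; exact hsphD _
        · exact hx.1) (b.θ j - δ j) (b.θ j) (b.θ j + δ j) ζ (by linarith [hδ0 j hj])
      (by linarith [hδ0 j hj]) hζβ hζ.2 hAB hq
    rcases hx2 with hx2 | hx2
    · have := hx1.2
      rw [hx2, hf.2.1] at this
      exact lt_irrefl _ this
    · exact lt_asymm hx1.2 hx2.2
  have hmin : ∀ j ∈ T \ Λ, ∃ m ∈ critPts f, IsLocalMin f m ∧ JoinedIn (W (v j)) (w j) m := by
    intro j hj
    rw [Finset.mem_sdiff] at hj
    have hWS : W (v j) = {y ∈ D | - v j < (fun x => - f x) y} := by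
      ext y; simp [hW]
    obtain ⟨m, hm1, hm2⟩ := comp_max (fun x => - f x) hcf.neg (- v j) (w j)
      (by simpa using (hwW j hj.1).2) (hwW j hj.1).1
    rw [← hWS] at hm1
    have hmb := htrap j hj.1 hj.2 m hm1
    have hlm : IsLocalMin f m := by
      have : 𝓝[D] m = 𝓝 m := nhdsWithin_eq_nhds.2
        (Filter.mem_of_superset (Metric.isOpen_ball.mem_nhds hmb) Metric.ball_subset_closedBall)
      rw [this] at hm2
      filter_upwards [hm2] with y hy
      linarith
    exact ⟨m, ⟨hmb, hlm.fderiv_eq_zero⟩, hlm, hm1⟩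
  choose! mm hmm1 hmm2 hmm3 using hmin
  have hqbd : ∀ t, sphPt t ∉ Metric.ball (0 : E2) 1 := fun t => by simp [norm_sphPt]
  have hinj' : ∀ i ∈ T \ Λ, ∀ j ∈ T \ Λ, v i < v j → mm i ≠ mm j := by
    intro i hi j hj hvij heq
    have hi' := Finset.mem_sdiff.1 hi
    have hj' := Finset.mem_sdiff.1 hj
    have h1 : JoinedIn (W (v j)) (w j) (w i) :=
      (hmm3 j hj).trans ((heq ▸ (hmm3 i hi).symm).mono (hWmono _ _ hvij.le))
    have h2 : JoinedIn (W (v j)) (w i) (sphPt (b.θ i)) := by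
      refine (hseg i hi'.1).symm.mono ?_
      intro x hx
      rcases hx with hx | hx
      · rw [hx]; exact ⟨hsphD _, by rw [hf.2.1]; exact hvij⟩
      · exact hWmono _ _ hvij.le hx
    exact hqbd _ (htrap j hj'.1 hj'.2 _ (h1.trans h2))
  have hinj : Set.InjOn mm (T \ Λ : Finset (Fin n)) := by
    intro i hi j hj heq
    by_contra hne
    rcases lt_trichotomy (v i) (v j) with h1 | h1 | h1
    · exact hinj' i hi j hj h1 heq
    · exact hne (hvinj i j h1)
    · exact hinj' j hj i hi h1 heq.symm
  have hdisj : Disjoint M ((T \ Λ).image mm) := by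
    rw [Finset.disjoint_left]
    intro x hxM hx
    obtain ⟨j, hj, rfl⟩ := Finset.mem_image.1 hx
    have h1 : IsLocalMax f (mm j) := (Finset.mem_filter.1 hxM).2
    have h2 := hmm2 j hj
    have hconst : f =ᶠ[𝓝 (mm j)] fun _ => f (mm j) := by
      filter_upwards [h1, h2] with t a b
      exact le_antisymm a b
    have hcrit : ∀ᶠ y in 𝓝 (mm j), y ∈ critPts f := by
      filter_upwards [hconst.fderiv (𝕜 := ℝ), Metric.isOpen_ball.mem_nhds (hmm1 j hj).1] with y hy hyb
      exact ⟨hyb, by rw [hy]; simp⟩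
    exact (infinite_of_mem_nhds (mm j) hcrit) hfin
  have hsub : M ∪ (T \ Λ).image mm ⊆ hfin.toFinset := by
    apply Finset.union_subset
    · exact Finset.filter_subset _ _
    · intro x hx
      obtain ⟨j, hj, rfl⟩ := Finset.mem_image.1 hx
      simpa using hmm1 j hj
  have hc := Finset.card_le_card hsub
  have hΛT : Λ ⊆ T := Finset.filter_subset _ _
  rw [Finset.card_union_of_disjoint hdisj, Finset.card_image_of_injOn hinj,
    Finset.card_sdiff_of_subset hΛT] at hc
  have hΛT' := Finset.card_le_card hΛT
  rw [hfin.encard_eq_coe_toFinset_card]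
  have : T.card + 1 ≤ hfin.toFinset.card := by omega
  exact_mod_cast this


def PP (y : ℝ) : ℝ := Real.exp 2 * expNegInvGlue (y - 1/2)

theorem PP_zero {y : ℝ} (h : y ≤ 1/2) : PP y = 0 := by
  rw [PP, expNegInvGlue.zero_of_nonpos (by linarith), mul_zero]

theorem PP_eq {y : ℝ} (h : 1/2 < y) : PP y = Real.exp (2 - (y - 1/2)⁻¹) := by
  rw [PP, expNegInvGlue, if_neg (by linarith), ← Real.exp_add]
  rfl

theorem PP_pos {y : ℝ} (h : 1/2 < y) : 0 < PP y := by
  rw [PP_eq h]; exact Real.exp_pos _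

theorem PP_nonneg (y : ℝ) : 0 ≤ PP y := by
  rcases le_or_gt y (1/2) with h | h
  · rw [PP_zero h]
  · exact (PP_pos h).le

theorem PP_one : PP 1 = 1 := by
  rw [PP_eq (by norm_num)]; norm_num

theorem PP_smooth : ContDiff ℝ (⊤ : ℕ∞) PP := by
  have h : ContDiff ℝ (⊤ : ℕ∞) expNegInvGlue := expNegInvGlue.contDiff
  have : ContDiff ℝ (⊤ : ℕ∞) (fun y : ℝ => y - 1/2) := by fun_prop
  exact contDiff_const.mul (h.comp this)

theorem PP_deriv (y : ℝ) : HasDerivAt PP (PP y * ((y - 1/2)⁻¹)^2) y := by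
  have h := expNegInvGlue.hasDerivAt_polynomial_eval_inv_mul 1 (y - 1/2)
  have h2 : HasDerivAt (fun y : ℝ => y - 1/2) 1 y := (hasDerivAt_id y).sub_const _
  have h3 := (h.comp y h2).const_mul (Real.exp 2)
  simp only [Polynomial.eval_one, one_mul, Polynomial.derivative_one, sub_zero, mul_one,
    Polynomial.eval_pow, Polynomial.eval_X] at h3
  have e : PP y * ((y - 1/2)⁻¹)^2 = Real.exp 2 * ((y - 1/2)⁻¹ ^ 2 * expNegInvGlue (y - 1/2)) := by
    simp only [PP]; ring
  rw [e]
  exact h3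

theorem inv_ge {y : ℝ} (h : 1/2 < y) (h1 : y ≤ 1) : 2 ≤ (y - 1/2)⁻¹ := by
  rw [le_inv_comm₀ (by norm_num) (by linarith)]; linarith

theorem PP_lt {y z : ℝ} (h : 1/2 < y) (hz : y < z) : PP y < PP z := by
  rw [PP_eq h, PP_eq (h.trans hz)]
  apply Real.exp_lt_exp.2
  have := inv_strictAnti₀ (show 0 < y - 1/2 by linarith) (show y - 1/2 < z - 1/2 by linarith)
  linarith

theorem PP_mono' {y z : ℝ} (h : 1/2 < y) (hz : y ≤ z) (h1 : z ≤ 1) :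
    PP y * ((y - 1/2)⁻¹)^2 ≤ PP z * ((z - 1/2)⁻¹)^2 := by
  rw [PP_eq h, PP_eq (h.trans_le hz)]
  have hw := inv_ge (h.trans_le hz) h1
  have hv := inv_anti₀ (show 0 < y - 1/2 by linarith) (show y - 1/2 ≤ z - 1/2 by linarith)
  generalize (y - 1/2)⁻¹ = v at *
  generalize (z - 1/2)⁻¹ = w at *
  have e : Real.exp (2 - w) = Real.exp (2 - v) * (Real.exp ((v-w)/2))^2 := by
    rw [← Real.exp_nat_mul, ← Real.exp_add]; congr 1; push_cast; ring
  rw [e, mul_assoc]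
  apply mul_le_mul_of_nonneg_left _ (Real.exp_pos _).le
  rw [← mul_pow]
  apply pow_le_pow_left₀ (by linarith)
  have := Real.add_one_le_exp ((v-w)/2)
  nlinarith

theorem PP_le4 {y : ℝ} (h : 1/2 < y) (h1 : y ≤ 1) : PP y * ((y - 1/2)⁻¹)^2 ≤ 4 := by
  have := PP_mono' h h1 le_rfl
  rw [PP_one] at this
  norm_num at this ⊢
  exact this

theorem PP_le {y : ℝ} (h0 : 0 ≤ y) (h1 : y ≤ 1) : PP y ≤ y := by
  rcases le_or_gt y (1/2) with h | h
  · rw [PP_zero h]; exact h0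
  rw [PP_eq h]
  have hu : 0 < y - 1/2 := by linarith
  have e1 : 2 - (y - 1/2)⁻¹ ≤ -(4*(1-y)) := by
    have : (y - 1/2)⁻¹ * (y-1/2) = 1 := inv_mul_cancel₀ hu.ne'
    nlinarith [sq_nonneg (y-1), inv_ge h h1]
  refine (Real.exp_le_exp.2 e1).trans ?_
  rw [Real.exp_neg]
  have := Real.add_one_le_exp (4*(1-y))
  rw [inv_le_comm₀ (Real.exp_pos _) (by linarith)]
  refine le_trans ?_ this
  rw [inv_le_iff_one_le_mul₀ (by linarith)]
  nlinarith

theorem arg_smul_sph (h : ℝ → ℝ) (hp : Function.Periodic h (2 * Real.pi)) (r t : ℝ) (hr : 0 < r) :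
    h (Complex.arg (toC (r • sphPt t))) = h t := by
  have : toC (r • sphPt t) = (r : ℂ) * (Complex.cos t + Complex.sin t * Complex.I) := by
    rw [← Complex.exp_mul_I, ← toC_sphPt]
    apply Complex.ext <;> simp [toC]
  rw [this, Complex.arg_mul_cos_add_sin_mul_I_eq_toIocMod hr]
  rw [toIocMod]
  have := hp.sub_zsmul_eq (x := t) (toIocDiv Real.two_pi_pos (-Real.pi) t)
  exact this

theorem contDiff_toC : ContDiff ℝ (⊤ : ℕ∞) toC := by
  have : toC = fun x : E2 => ((Complex.ofRealCLM (EuclideanSpace.proj (0 : Fin 2) x)) : ℂ) +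
      (Complex.ofRealCLM (EuclideanSpace.proj (1 : Fin 2) x)) * Complex.I := by
    funext x; apply Complex.ext <;> simp [toC]
  rw [this]; fun_prop

theorem arg_smooth (h : ℝ → ℝ) (hh : ContDiff ℝ (⊤ : ℕ∞) h)
    (z : ℂ) (hz : z ∈ Complex.slitPlane) :
    ContDiffAt ℝ (⊤ : ℕ∞) (fun z => h (Complex.arg z)) z := by
  have h1 : ContDiffAt ℝ (⊤ : ℕ∞) Complex.log z := (Complex.contDiffAt_log hz).restrict_scalars ℝ
  have h2 : ContDiffAt ℝ (⊤ : ℕ∞) (fun z => Complex.imCLM (Complex.log z)) z :=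
    Complex.imCLM.contDiff.contDiffAt.comp z h1
  have h3 : ContDiffAt ℝ (⊤ : ℕ∞) (fun z => h (Complex.imCLM (Complex.log z))) z :=
    ContDiffAt.comp z hh.contDiffAt h2
  simpa [Complex.log_im] using h3

theorem polar_smooth (Q : ℝ → ℝ) (hQ : ContDiff ℝ (⊤ : ℕ∞) Q) (hQ0 : ∀ y ≤ 1/2, Q y = 0)
    (h : ℝ → ℝ) (hh : ContDiff ℝ (⊤ : ℕ∞) h) (hp : Function.Periodic h (2 * Real.pi)) :
    ContDiff ℝ (⊤ : ℕ∞) (fun x : E2 => Q (‖x‖^2) * h (Complex.arg (toC x))) := by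
  rw [contDiff_iff_contDiffAt]
  intro x
  by_cases hx : x = 0
  · have : (fun x : E2 => Q (‖x‖^2) * h (Complex.arg (toC x))) =ᶠ[𝓝 x] fun _ => 0 := by
      have hc : ContinuousAt (fun x : E2 => ‖x‖^2) x := by fun_prop
      have := hc.eventually (gt_mem_nhds (show ‖x‖^2 < 1/2 by simp [hx]))
      filter_upwards [this] with y hy
      rw [hQ0 _ hy.le, zero_mul]
    exact contDiffAt_const.congr_of_eventuallyEq this
  have hQ' : ContDiffAt ℝ (⊤ : ℕ∞) (fun x : E2 => Q (‖x‖^2)) x :=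
    (hQ.comp (contDiff_norm_sq ℝ)).contDiffAt
  apply hQ'.mul
  have hz : toC x ≠ 0 := by
    rw [← norm_ne_zero_iff, norm_toC]; simpa using hx
  by_cases hs : toC x ∈ Complex.slitPlane
  · exact ContDiffAt.comp x (g := fun z => h (Complex.arg z)) (arg_smooth h hh _ hs) contDiff_toC.contDiffAt
  · have hs' : - toC x ∈ Complex.slitPlane := by
      rw [Complex.mem_slitPlane_iff] at hs ⊢
      push Not at hs
      left
      simp only [Complex.neg_re, Left.neg_pos_iff]
      rcases hs.1.lt_or_eq with h | h
      · exact h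
      · exact (hz (Complex.ext h hs.2)).elim
    have h1 := arg_smooth (fun t => h (t + Real.pi)) (hh.comp (by fun_prop)) _ hs'
    have h2 : ContDiffAt ℝ (⊤ : ℕ∞) (fun x => h (Complex.arg (- toC x) + Real.pi)) x :=
      ContDiffAt.comp x (f := fun x => - toC x) h1 contDiff_toC.neg.contDiffAt
    apply h2.congr_of_eventuallyEq
    filter_upwards [isOpen_ne.mem_nhds hx] with y hy
    set s := Complex.arg (- toC y) with hs
    have e1 : toC (-y) = - toC y := by apply Complex.ext <;> simp [toC]
    have e2 : y = ‖y‖ • sphPt (s + Real.pi) := by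
      have := polar (-y)
      rw [e1, ← hs, norm_neg] at this
      have e3 : sphPt (s + Real.pi) = - sphPt s := by
        ext i
        fin_cases i
        · simp [sphPt_zero]
        · simp [sphPt_one]
      rw [e3, smul_neg, ← this, neg_neg]
    have e4 := arg_smul_sph h hp ‖y‖ (s + Real.pi) (norm_pos_iff.2 hy)
    rwa [← e2] at e4

theorem hasDerivAt_sphPt (t : ℝ) : HasDerivAt sphPt (sphPt (t + Real.pi/2)) t := by
  have : HasDerivAt (fun t : ℝ => ![Real.cos t, Real.sin t])
      ![Real.cos (t + Real.pi/2), Real.sin (t + Real.pi/2)] t := by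
    rw [hasDerivAt_pi]
    intro i
    fin_cases i
    · have := Real.hasDerivAt_cos t
      rw [← Real.cos_add_pi_div_two] at this
      exact this
    · have := Real.hasDerivAt_sin t
      rw [← Real.sin_add_pi_div_two] at this
      exact this
  exact ((EuclideanSpace.equiv (Fin 2) ℝ).symm.hasFDerivAt).comp_hasDerivAt t this

theorem polar_deriv (f : E2 → ℝ) (hf : ContDiff ℝ (⊤ : ℕ∞) f) (F Fr Ft : ℝ → ℝ → ℝ)
    (hF : ∀ r t, 0 < r → f (r • sphPt t) = F r t)
    (hFr : ∀ r t, 0 < r → HasDerivAt (fun r => F r t) (Fr r t) r)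
    (hFt : ∀ r t, 0 < r → HasDerivAt (fun t => F r t) (Ft r t) t) (r t : ℝ) (hr : 0 < r) :
    fderiv ℝ f (r • sphPt t) (sphPt t) = Fr r t ∧
    fderiv ℝ f (r • sphPt t) (r • sphPt (t + Real.pi/2)) = Ft r t := by
  constructor
  · apply (radial_hasDerivAt f hf (sphPt t) r).unique
    apply (hFr r t hr).congr_of_eventuallyEq
    filter_upwards [lt_mem_nhds hr] with s hs
    exact hF s t hs
  · have h1 : HasFDerivAt f (fderiv ℝ f (r • sphPt t)) (r • sphPt t) :=
      (hf.differentiable (by simp)).differentiableAt.hasFDerivAt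
    have h2 : HasDerivAt (fun t : ℝ => r • sphPt t) (r • sphPt (t + Real.pi/2)) t :=
      (hasDerivAt_sphPt t).const_smul r
    apply (h1.comp_hasDerivAt t h2).unique
    apply (hFt r t hr).congr_of_eventuallyEq
    exact Filter.Eventually.of_forall fun s => hF r s hr

theorem ext_of_polar {n : ℕ} (b : Ribbon n) (f : E2 → ℝ) (hf : ContDiff ℝ (⊤ : ℕ∞) f)
    (F Fr Ft : ℝ → ℝ → ℝ)
    (hF : ∀ r t, 0 < r → f (r • sphPt t) = F r t)
    (hFr : ∀ r t, 0 < r → HasDerivAt (fun r => F r t) (Fr r t) r)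
    (hFt : ∀ r t, 0 < r → HasDerivAt (fun t => F r t) (Ft r t) t)
    (hg : ∀ t, F 1 t = b.g t)
    (hneg : ∀ i, deriv (deriv b.g) (b.θ i) < 0 → 0 < (b.ν i : ℝ) * Fr 1 (b.θ i))
    (hpos : ∀ i, 0 < deriv (deriv b.g) (b.θ i) → (b.ν i : ℝ) * Fr 1 (b.θ i) < 0) :
    IsExtension b f ∧ ∀ x ∈ critPts f, x = 0 ∨ ∃ r t, 0 < r ∧ r < 1 ∧
      t ∈ Set.Ico (0 : ℝ) (2 * Real.pi) ∧ x = r • sphPt t ∧ Fr r t = 0 ∧ Ft r t = 0 := by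
  have hd := polar_deriv f hf F Fr Ft hF hFr hFt
  have hd1 : ∀ t, fderiv ℝ f (sphPt t) (sphPt t) = Fr 1 t := fun t => by
    have := (hd 1 t one_pos).1
    rwa [one_smul] at this
  refine ⟨⟨hf, ?_, ?_, ?_⟩, ?_⟩
  · intro t
    rw [← hg, ← hF 1 t one_pos, one_smul]
  · intro x hx h0
    obtain ⟨t, ht, hxt⟩ := exists_angle x 0
    rw [mem_sphere_zero_iff_norm.1 hx, one_smul] at hxt
    rw [zero_add] at ht
    have h1 := hd1 t
    have h2 := (hd 1 t one_pos).2
    rw [one_smul] at h2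
    rw [← hxt, h0] at h2 h1
    simp only [zero_apply] at h1 h2
    have h3 := hFt 1 t one_pos
    have : (fun t => F 1 t) = b.g := funext hg
    rw [this, ← h2] at h3
    obtain ⟨i, hi⟩ := b.crit_only t ht h3.deriv
    subst hi
    rcases lt_or_gt_of_ne (b.node_nondeg i) with h | h
    · have := hneg i h
      rw [← h1] at this; simp at this
    · have := hpos i h
      rw [← h1] at this; simp at this
  · intro i
    rw [inner_grad, hd1]
    exact ⟨hneg i, hpos i⟩
  · intro x hx
    by_cases h0 : x = 0
    · exact Or.inl h0
    right
    obtain ⟨t, ht, hxt⟩ := exists_angle x 0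
    rw [zero_add] at ht
    have hr : 0 < ‖x‖ := norm_pos_iff.2 h0
    have := hd ‖x‖ t hr
    rw [← hxt, hx.2] at this
    exact ⟨‖x‖, t, hr, by simpa using hx.1, ht, hxt, this.1.symm, this.2.symm⟩


theorem periodic_deriv (g : ℝ → ℝ) (c : ℝ) (hp : Function.Periodic g c) :
    Function.Periodic (deriv g) c := by
  intro t
  rw [← deriv_comp_add_const]
  congr 1
  funext s
  exact hp s

theorem near (g : ℝ → ℝ) (hg : ContDiff ℝ (⊤ : ℕ∞) g) (hp : Function.Periodic g (2 * Real.pi))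
    (τ : ℝ) (h1 : deriv g τ = 0) (h2 : 0 < deriv (deriv g) τ) :
    ∃ ε : ℝ, 0 < ε ∧ ε ≤ 1 ∧ ∀ t, 1 - Real.cos (t - τ) < ε → Real.sin (t - τ) ≠ 0 →
      0 < deriv g t * Real.sin (t - τ) := by
  obtain ⟨δ, h0, hδ1, hδ⟩ := local_sign g hg τ h1 h2
  have hpi := Real.pi_gt_three
  have hc1 : Real.cos δ < 1 := by
    have := Real.strictAntiOn_cos ⟨le_rfl, Real.pi_pos.le⟩ (show δ ∈ Set.Icc 0 Real.pi from ⟨h0.le, by linarith⟩) h0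
    rwa [Real.cos_zero] at this
  have hc0 : 0 < Real.cos δ := Real.cos_pos_of_mem_Ioo ⟨by linarith, by linarith⟩
  refine ⟨1 - Real.cos δ, by linarith, by linarith, ?_⟩
  intro t ht hs
  obtain ⟨s, m, hsm, hs1⟩ : ∃ s : ℝ, ∃ m : ℤ, t - τ = s + m * (2 * Real.pi) ∧ |s| ≤ Real.pi := by
    refine ⟨toIcoMod Real.two_pi_pos (-Real.pi) (t - τ), toIcoDiv Real.two_pi_pos (-Real.pi) (t - τ), ?_, ?_⟩
    · have := toIcoMod_add_toIcoDiv_zsmul Real.two_pi_pos (-Real.pi) (t - τ)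
      rw [zsmul_eq_mul] at this
      exact this.symm
    · have := toIcoMod_mem_Ico Real.two_pi_pos (-Real.pi) (t - τ)
      exact abs_le.2 ⟨this.1, by linarith [this.2]⟩
  rw [hsm, Real.cos_add_int_mul_two_pi] at ht
  rw [hsm, Real.sin_add_int_mul_two_pi] at hs ⊢
  have hsδ : |s| < δ := by
    by_contra hcon
    push Not at hcon
    have := Real.strictAntiOn_cos.antitoneOn (show δ ∈ Set.Icc 0 Real.pi from ⟨h0.le, by linarith⟩)
      (show |s| ∈ Set.Icc 0 Real.pi from ⟨abs_nonneg _, hs1⟩) hcon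
    rw [Real.cos_abs] at this
    linarith
  have hs0 : s ≠ 0 := by rintro rfl; simp at hs
  have e : deriv g t = deriv g (τ + s) := by
    have : t = (τ + s) + m * (2 * Real.pi) := by linarith
    rw [this]
    exact (periodic_deriv g _ hp).int_mul m _
  rw [e]
  have h3 := (hδ (τ + s) (by simpa using hsδ.le) (by simpa using hs0)).1
  rw [add_sub_cancel_left] at h3
  rw [abs_lt] at hsδ
  rcases lt_or_gt_of_ne hs0 with h | h
  · have h4 := Real.sin_neg_of_neg_of_neg_pi_lt h (by linarith)
    have : deriv g (τ + s) < 0 := by by_contra hc; nlinarith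
    exact mul_pos_of_neg_of_neg this h4
  · have h4 := Real.sin_pos_of_pos_of_lt_pi h (by linarith)
    have : 0 < deriv g (τ + s) := by by_contra hc; nlinarith
    exact mul_pos this h4

theorem near_node {n : ℕ} (b : Ribbon n) (i j : Fin n) (ε : ℝ) (hε : ε ≤ 1)
    (h : ∀ t, 1 - Real.cos (t - b.θ i) < ε → Real.sin (t - b.θ i) ≠ 0 → deriv b.g t ≠ 0)
    (hij : j ≠ i) : ε ≤ 1 - Real.cos (b.θ j - b.θ i) := by
  by_contra hcon
  push Not at hcon
  by_cases hs : Real.sin (b.θ j - b.θ i) = 0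
  · have hc : 0 < Real.cos (b.θ j - b.θ i) := by linarith
    have hc1 : Real.cos (b.θ j - b.θ i) = 1 := by
      have := Real.sin_sq_add_cos_sq (b.θ j - b.θ i)
      rw [hs] at this
      nlinarith
    have hi := b.theta_mem i
    have hj := b.theta_mem j
    have := (Real.cos_eq_one_iff_of_lt_of_lt (by linarith [hi.2, hj.1]) (by linarith [hi.1, hj.2])).1 hc1
    exact hij (b.theta_mono.injective (by linarith))
  · exact h _ hcon hs (b.node_crit j)

theorem bump {n : ℕ} (b : Ribbon n) (i : Fin n) (hi : 0 < deriv (deriv b.g) (b.θ i)) :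
    ∃ β : ℝ → ℝ, ContDiff ℝ (⊤ : ℕ∞) β ∧ Function.Periodic β (2 * Real.pi) ∧
      (∀ t, deriv β t * deriv b.g t ≤ 0) ∧ β (b.θ i) = 1 ∧ ∀ j, j ≠ i → β (b.θ j) = 0 := by
  obtain ⟨ε, h0, h1, h⟩ := near b.g b.smooth_g b.periodic_g _ (b.node_crit i) hi
  have hstc : ContDiff ℝ (⊤ : ℕ∞) Real.smoothTransition := Real.smoothTransition.contDiff
  refine ⟨fun t => Real.smoothTransition (1 - (1 - Real.cos (t - b.θ i)) / ε), ?_, ?_, ?_, ?_, ?_⟩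
  · apply hstc.comp
    fun_prop
  · intro t
    have : t + 2 * Real.pi - b.θ i = t - b.θ i + 2 * Real.pi := by ring
    simp only [this, Real.cos_add_two_pi]
  · intro t
    set q := 1 - (1 - Real.cos (t - b.θ i)) / ε with hq
    have hd : HasDerivAt (fun t => Real.smoothTransition (1 - (1 - Real.cos (t - b.θ i)) / ε))
        (deriv Real.smoothTransition q * (- (Real.sin (t - b.θ i) / ε))) t := by
      have h3 : HasDerivAt Real.smoothTransition (deriv Real.smoothTransition q) q :=
        (hstc.differentiable (by simp)).differentiableAt.hasDerivAt
      have h4 : HasDerivAt (fun t => 1 - (1 - Real.cos (t - b.θ i)) / ε)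
          (- (Real.sin (t - b.θ i) / ε)) t := by
        have h5 := (Real.hasDerivAt_cos (t - b.θ i)).comp t ((hasDerivAt_id t).sub_const (b.θ i))
        have h6 := (((h5.const_sub 1).div_const ε).const_sub 1)
        exact h6.congr_deriv (by simp)
      exact h3.comp t h4
    rw [hd.deriv]
    have hst0 : 0 ≤ deriv Real.smoothTransition q := Real.smoothTransition.monotone.deriv_nonneg
    by_cases hfar : ε ≤ 1 - Real.cos (t - b.θ i)
    · have hq0 : q ≤ 0 := by
        have : 1 ≤ (1 - Real.cos (t - b.θ i)) / ε := by rwa [le_div_iff₀ h0, one_mul]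
        linarith
      have : IsLocalMin Real.smoothTransition q := Filter.Eventually.of_forall fun x => by
        rw [Real.smoothTransition.zero_of_nonpos hq0]; exact Real.smoothTransition.nonneg x
      rw [this.deriv_eq_zero]; simp
    · push Not at hfar
      by_cases hs : Real.sin (t - b.θ i) = 0
      · rw [hs]; simp
      · have h7 := h t hfar hs
        have : deriv Real.smoothTransition q * (- (Real.sin (t - b.θ i) / ε)) * deriv b.g t
          = - (deriv Real.smoothTransition q * (deriv b.g t * Real.sin (t - b.θ i)) / ε) := by ring
        rw [this]
        have : 0 ≤ deriv Real.smoothTransition q * (deriv b.g t * Real.sin (t - b.θ i)) / ε := by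
          positivity
        linarith
  · simp
  · intro j hj
    apply Real.smoothTransition.zero_of_nonpos
    have h8 := near_node b i j ε h1 (fun t a c e => by have := h t a c; rw [e] at this; simp at this) hj
    have : 1 ≤ (1 - Real.cos (b.θ j - b.θ i)) / ε := by rwa [le_div_iff₀ h0, one_mul]
    linarith

theorem bumpT {n : ℕ} (b : Ribbon n) (T : Finset (Fin n)) :
    (∀ i ∈ T, 0 < deriv (deriv b.g) (b.θ i)) →
    ∃ β : ℝ → ℝ, ContDiff ℝ (⊤ : ℕ∞) β ∧ Function.Periodic β (2 * Real.pi) ∧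
      (∀ t, deriv β t * deriv b.g t ≤ 0) ∧ (∀ i ∈ T, β (b.θ i) = 1) ∧ ∀ j, j ∉ T → β (b.θ j) = 0 := by
  classical
  induction T using Finset.induction_on with
  | empty =>
    intro _
    exact ⟨fun _ => 0, contDiff_const, fun _ => rfl, by simp, by simp, by simp⟩
  | insert a T haT ih =>
    intro hT
    obtain ⟨β, a1, a2, a3, a4, a5⟩ := ih (fun i hi => hT i (Finset.mem_insert_of_mem hi))
    obtain ⟨β', b1, b2, b3, b4, b5⟩ := bump b a (hT a (Finset.mem_insert_self _ _))
    refine ⟨fun t => β t + β' t, a1.add b1, ?_, ?_, ?_, ?_⟩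
    · intro t; simp only [a2 t, b2 t]
    · intro t
      rw [deriv_fun_add (a1.differentiable (by simp)).differentiableAt
        (b1.differentiable (by simp)).differentiableAt]
      linarith [a3 t, b3 t]
    · intro i hi
      rcases Finset.mem_insert.1 hi with h | h
      · subst h; simp only [b4, a5 i haT]; norm_num
      · have : i ≠ a := fun e => haT (e ▸ h)
        simp only [a4 i h, b5 i this]; norm_num
    · intro j hj
      rw [Finset.mem_insert, not_or] at hj
      simp only [a5 j hj.2, b5 j hj.1]; norm_num

theorem periodic_bdd (h : ℝ → ℝ) (hc : Continuous h) (hp : Function.Periodic h (2 * Real.pi)) :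
    ∃ C, 0 < C ∧ ∀ t, |h t| ≤ C := by
  have := (hp.isBounded_of_continuous Real.two_pi_pos.ne' hc)
  obtain ⟨C, hC⟩ := this.exists_norm_le
  exact ⟨|C| + 1, by positivity, fun t => (hC _ ⟨t, rfl⟩).trans (by linarith [le_abs_self C])⟩

theorem upper {n : ℕ} (b : Ribbon n) (T : Finset (Fin n))
    (hmax : ∀ i, deriv (deriv b.g) (b.θ i) < 0 → b.ν i = -1)
    (hT : ∀ i ∈ T, 0 < deriv (deriv b.g) (b.θ i) ∧ b.ν i = -1)
    (hN : ∀ i, i ∉ T → 0 < deriv (deriv b.g) (b.θ i) → b.ν i = 1) :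
    ∃ f, IsExtension b f ∧ (critPts f).encard ≤ ((T.card + 1 : ℕ) : ℕ∞) := by
  classical
  obtain ⟨β, hβ, hβp, hβg, hβ1, hβ0⟩ := bumpT b T (fun i hi => (hT i hi).1)
  obtain ⟨C, hC0, hC⟩ := periodic_bdd b.g b.smooth_g.continuous b.periodic_g
  set G : ℝ → ℝ := fun t => b.g t + C with hG
  have hG0 : ∀ t, 0 ≤ G t := fun t => by have := abs_le.1 (hC t); simp only [hG]; linarith
  have hG1 : ∀ t, G t ≤ 2 * C := fun t => by have := abs_le.1 (hC t); simp only [hG]; linarith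
  set K := 8 * C + 1 with hK
  set L := K + 1 with hL
  have hKpos : 0 < K := by positivity
  have hLpos : 0 < L := by positivity
  set Q2 : ℝ → ℝ := fun y => PP y * (-(L * (1 - y))) with hQ2
  set f : E2 → ℝ := fun x => -C + PP (‖x‖^2) * G (Complex.arg (toC x)) +
    Q2 (‖x‖^2) * β (Complex.arg (toC x)) + K * (1 - ‖x‖^2) with hfdef
  set F : ℝ → ℝ → ℝ := fun r t => -C + PP (r^2) * G t + Q2 (r^2) * β t + K * (1 - r^2) with hFdef
  have hGs : ContDiff ℝ (⊤ : ℕ∞) G := b.smooth_g.add contDiff_const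
  have hGp : Function.Periodic G (2 * Real.pi) := fun t => by simp only [hG, b.periodic_g t]
  have hf : ContDiff ℝ (⊤ : ℕ∞) f := by
    have e1 := polar_smooth PP PP_smooth (fun y => PP_zero) G hGs hGp
    have e2 := polar_smooth Q2 (PP_smooth.mul (by fun_prop))
      (fun y hy => by simp only [hQ2, PP_zero hy, zero_mul]) β hβ hβp
    have e3 : ContDiff ℝ (⊤ : ℕ∞) (fun x : E2 => K * (1 - ‖x‖^2)) :=
      contDiff_const.mul (contDiff_const.sub (contDiff_norm_sq ℝ))
    exact ((contDiff_const.add e1).add e2).add e3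
  have hF : ∀ r t, 0 < r → f (r • sphPt t) = F r t := by
    intro r t hr
    simp only [hfdef, hFdef, arg_smul_sph G hGp r t hr, arg_smul_sph β hβp r t hr, norm_smul,
      norm_sphPt, Real.norm_eq_abs, mul_one, sq_abs]
  set Fr : ℝ → ℝ → ℝ := fun r t => 2 * r * (PP (r^2) * ((r^2 - 1/2)⁻¹)^2 * G t +
    L * β t * PP (r^2) * (1 - (1 - r^2) * ((r^2 - 1/2)⁻¹)^2) - K) with hFrdef
  set Ft : ℝ → ℝ → ℝ := fun r t => PP (r^2) * (deriv b.g t - L * (1 - r^2) * deriv β t) with hFtdef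
  have hFr : ∀ r t, 0 < r → HasDerivAt (fun r => F r t) (Fr r t) r := by
    intro r t _
    have hr2 : HasDerivAt (fun r : ℝ => r^2) (2 * r) r := by simpa using hasDerivAt_pow 2 r
    have d1 : HasDerivAt (fun r : ℝ => PP (r^2)) (PP (r^2) * ((r^2 - 1/2)⁻¹)^2 * (2 * r)) r :=
      HasDerivAt.comp (h₂ := PP) r (PP_deriv (r^2)) hr2
    have d2 : HasDerivAt (fun r : ℝ => -(L * (1 - r^2))) _ r :=
      ((hr2.const_sub 1).const_mul L).neg
    have d3 := (((d1.mul_const (G t)).const_add (-C)).add ((d1.mul d2).mul_const (β t))).add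
      ((hr2.const_sub 1).const_mul K)
    exact d3.congr_deriv (by simp only [hFrdef]; ring)
  have hFt : ∀ r t, 0 < r → HasDerivAt (fun t => F r t) (Ft r t) t := by
    intro r t _
    have d1 : HasDerivAt b.g (deriv b.g t) t :=
      (b.smooth_g.differentiable (by simp)).differentiableAt.hasDerivAt
    have d2 : HasDerivAt β (deriv β t) t :=
      (hβ.differentiable (by simp)).differentiableAt.hasDerivAt
    have d3 := ((((d1.add_const C).const_mul (PP (r^2))).const_add (-C)).add
      (d2.const_mul (Q2 (r^2)))).add_const (K * (1 - r^2))
    exact d3.congr_deriv (by simp only [hFtdef, hQ2]; ring)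
  have hFr1 : ∀ t, Fr 1 t = 2 * (4 * G t + L * β t - K) := by
    intro t; simp only [hFrdef, one_pow, PP_one]; norm_num
  have hFrT : ∀ i ∈ T, 0 < Fr 1 (b.θ i) := by
    intro i hi
    rw [hFr1, hβ1 i hi]; linarith [hG0 (b.θ i)]
  have hFrN : ∀ i, i ∉ T → Fr 1 (b.θ i) < 0 := by
    intro i hi
    rw [hFr1, hβ0 i hi]; linarith [hG1 (b.θ i)]
  obtain ⟨hext, hcrit⟩ := ext_of_polar b f hf F Fr Ft hF hFr hFt
    (by intro t; simp only [hFdef, hQ2, one_pow, PP_one, hG]; ring)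
    (by
      intro i hi
      have : i ∉ T := fun h => lt_asymm hi (hT i h).1
      rw [hmax i hi]; push_cast; linarith [hFrN i this])
    (by
      intro i hi
      by_cases h : i ∈ T
      · rw [(hT i h).2]; push_cast; linarith [hFrT i h]
      · rw [hN i h hi]; push_cast; linarith [hFrN i h])
  refine ⟨f, hext, ?_⟩
  -- uniqueness
  have huniq : ∀ i ∈ T, ∀ r s : ℝ, 0 < r → r < s → s < 1 → 1/2 < r^2 → Fr r (b.θ i) = 0 →
      Fr s (b.θ i) = 0 → False := by
    intro i hi r s hr hrs hs h2 e1 e2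
    simp only [hFrdef, hβ1 i hi, mul_one] at e1 e2
    have hyz : r^2 < s^2 := by nlinarith
    have hz1 : s^2 < 1 := by nlinarith
    have e1 := (mul_eq_zero.1 e1).resolve_left (by positivity)
    have e2 := (mul_eq_zero.1 e2).resolve_left (by have := hr.trans hrs; positivity)
    generalize r^2 = y at *
    generalize s^2 = z at *
    have m1 := PP_mono' h2 hyz.le hz1.le
    have m2 := PP_lt h2 hyz
    have m3 := PP_le4 h2 (hyz.trans hz1).le
    have m4 := inv_strictAnti₀ (show 0 < y - 1/2 by linarith) (show y - 1/2 < z - 1/2 by linarith)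
    have m5 := inv_ge (h2.trans hyz) hz1.le
    have m6 := PP_pos h2
    have g0 := hG0 (b.θ i)
    have g1 := hG1 (b.θ i)
    generalize (y - 1/2)⁻¹ = u at *
    generalize (z - 1/2)⁻¹ = w at *
    generalize PP y = p at *
    generalize PP z = q at *
    generalize G (b.θ i) = γ at *
    have n1 : p * u^2 * γ ≤ 8 * C := by
      have : p * u^2 * γ ≤ 4 * γ := mul_le_mul_of_nonneg_right m3 g0
      linarith
    have n2 : 0 < 1 - (1 - y) * u^2 := by
      have : 0 < L * p * (1 - (1 - y) * u^2) := by linarith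
      by_contra hc
      push Not at hc
      have := mul_nonpos_of_nonneg_of_nonpos (mul_pos hLpos m6).le hc
      linarith
    have n3 : w^2 < u^2 := by nlinarith
    have n4 : (1 - z) * w^2 ≤ (1 - y) * u^2 :=
      mul_le_mul (by linarith) n3.le (by positivity) (by linarith)
    have n5 : p * u^2 * γ ≤ q * w^2 * γ := mul_le_mul_of_nonneg_right m1 g0
    have n6 : p * (1 - (1 - y) * u^2) < q * (1 - (1 - z) * w^2) := by
      have a1 : p * (1 - (1 - y) * u^2) < q * (1 - (1 - y) * u^2) := mul_lt_mul_of_pos_right m2 n2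
      have a2 : q * (1 - (1 - y) * u^2) ≤ q * (1 - (1 - z) * w^2) :=
        mul_le_mul_of_nonneg_left (by linarith) (by linarith)
      linarith
    have n7 := mul_lt_mul_of_pos_left n6 hLpos
    linarith
  have hρ : ∀ i ∈ T, ∃ ρ : ℝ, ∀ r : ℝ, 0 < r → r < 1 → 1/2 < r^2 → Fr r (b.θ i) = 0 → r = ρ := by
    intro i hi
    by_cases hex : ∃ r : ℝ, 0 < r ∧ r < 1 ∧ 1/2 < r^2 ∧ Fr r (b.θ i) = 0
    · obtain ⟨ρ, a1, a2, a3, a4⟩ := hex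
      refine ⟨ρ, fun r b1 b2 b3 b4 => ?_⟩
      rcases lt_trichotomy r ρ with h | h | h
      · exact (huniq i hi r ρ b1 h a2 b3 b4 a4).elim
      · exact h
      · exact (huniq i hi ρ r a1 h b2 a3 a4 b4).elim
    · push Not at hex
      exact ⟨0, fun r b1 b2 b3 b4 => (hex r b1 b2 b3 b4).elim⟩
  choose! ρ hρ using hρ
  have hsub : critPts f ⊆ ((insert 0 (T.image fun i => ρ i • sphPt (b.θ i)) : Finset E2) : Set E2) := by
    intro x hx
    rw [Finset.coe_insert]
    rcases hcrit x hx with h | ⟨r, t, hr0, hr1, ht, hxr, h1, h2⟩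
    · exact Or.inl h
    right
    have hy : 1/2 < r^2 := by
      by_contra hc
      push Not at hc
      simp only [hFrdef, PP_zero hc] at h1
      have := (mul_eq_zero.1 h1).resolve_left (by positivity)
      linarith
    have hy1 : r^2 < 1 := by nlinarith
    have hg0 : deriv b.g t = 0 := by
      have h3 := (mul_eq_zero.1 h2).resolve_left (PP_pos hy).ne'
      have h4 := hβg t
      have h5 : deriv b.g t * deriv b.g t = L * (1 - r^2) * (deriv β t * deriv b.g t) := by
        have : deriv b.g t = L * (1 - r^2) * deriv β t := by linarith
        calc deriv b.g t * deriv b.g t = (L * (1 - r^2) * deriv β t) * deriv b.g t := by rw [← this]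
          _ = _ := by ring
      have h6 : L * (1 - r^2) * (deriv β t * deriv b.g t) ≤ 0 :=
        mul_nonpos_of_nonneg_of_nonpos (mul_nonneg hLpos.le (by linarith)) h4
      have h7 := mul_self_nonneg (deriv b.g t)
      exact mul_self_eq_zero.1 (by linarith)
    obtain ⟨i, hi⟩ := b.crit_only t ht hg0
    subst hi
    by_cases hiT : i ∈ T
    · have := hρ i hiT r hr0 hr1 hy h1
      rw [hxr, this]
      exact Finset.mem_coe.2 (Finset.mem_image_of_mem _ hiT)
    · exfalso
      simp only [hFrdef, hβ0 i hiT] at h1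
      have h3 := (mul_eq_zero.1 h1).resolve_left (by positivity)
      have := mul_le_mul_of_nonneg_right (PP_le4 hy hy1.le) (hG0 (b.θ i))
      linarith [hG1 (b.θ i)]
  calc (critPts f).encard ≤ _ := Set.encard_le_encard hsub
    _ = _ := Set.encard_coe_eq_coe_finsetCard _
    _ ≤ _ := by
      have h1 := Finset.card_insert_le (0 : E2) (T.image fun i => ρ i • sphPt (b.θ i))
      have h2 : (T.image fun i => ρ i • sphPt (b.θ i)).card ≤ T.card := Finset.card_image_le
      exact_mod_cast h1.trans (by omega)


theorem mod_node {n : ℕ} (b : Ribbon n) (t : ℝ) (h : deriv b.g t = 0) :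
    ∃ i, ∃ k : ℤ, t = b.θ i + k * (2 * Real.pi) := by
  have e := toIcoMod_add_toIcoDiv_zsmul Real.two_pi_pos 0 t
  rw [zsmul_eq_mul] at e
  have hm := toIcoMod_mem_Ico Real.two_pi_pos 0 t
  rw [zero_add] at hm
  generalize toIcoMod Real.two_pi_pos 0 t = s at *
  have h' : deriv b.g s = 0 := by
    rw [← e] at h
    rw [← h]
    exact ((periodic_deriv b.g _ b.periodic_g).int_mul _ _).symm
  obtain ⟨i, hi⟩ := b.crit_only s hm h'
  exact ⟨i, _, by rw [← hi]; exact e.symm⟩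

set_option maxHeartbeats 1600000 in
theorem zero_case {n : ℕ} (b : Ribbon n) (m : Fin n) (hm : ∀ t, b.g t ≤ b.g (b.θ m))
    (hmin : ∀ i, 0 < deriv (deriv b.g) (b.θ i) → b.ν i = 1) (hmm : b.ν m = 1)
    (hmx : ∀ i, i ≠ m → deriv (deriv b.g) (b.θ i) < 0 → b.ν i = -1) :
    ∃ f, IsExtension b f ∧ critPts f = ∅ := by
  set τ := b.θ m with hτ
  set M := b.g τ with hM
  have hgd : Differentiable ℝ b.g := b.smooth_g.differentiable (by simp)
  have hneg : deriv (deriv b.g) τ < 0 := by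
    rcases lt_or_gt_of_ne (b.node_nondeg m) with h | h
    · exact h
    · exact (b.node_nondeg m (no_both _ _ (Filter.Eventually.of_forall hm)
        (isLocalMin_of_deriv_deriv_pos h (b.node_crit m) b.smooth_g.continuous.continuousAt))).elim
  have hdn : deriv (fun t => - b.g t) = fun t => - deriv b.g t := by
    funext t; exact deriv.fun_neg
  obtain ⟨ε, h0, h1, hnear'⟩ := near (fun t => - b.g t) b.smooth_g.neg
    (fun t => by simp only [b.periodic_g t]) τ (by rw [hdn]; simp only [hτ, b.node_crit, neg_zero])
    (by rw [hdn, deriv.fun_neg]; linarith)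
  have hnear : ∀ t, 1 - Real.cos (t - τ) < ε → Real.sin (t - τ) ≠ 0 →
      deriv b.g t * Real.sin (t - τ) < 0 := by
    intro t a c
    have := hnear' t a c
    rw [hdn] at this
    linarith
  have hfarnode : ∀ i, i ≠ m → ε ≤ 1 - Real.cos (b.θ i - τ) := fun i hi =>
    near_node b m i ε h1 (fun t a c e => by have := hnear t a c; rw [e] at this; simp at this) hi
  obtain ⟨m0, hm0, hm0'⟩ : ∃ m0 : ℝ, 0 < m0 ∧ ∀ t, ε ≤ 1 - Real.cos (t - τ) → m0 ≤ M - b.g t := by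
    have hK : IsCompact (Set.Icc 0 (2 * Real.pi) ∩ {t | ε ≤ 1 - Real.cos (t - τ)}) := by
      apply isCompact_Icc.inter_right
      exact isClosed_le continuous_const (by fun_prop)
    have hgc := b.smooth_g.continuous
    obtain ⟨m0, h2, h3⟩ := hK.exists_forall_le' (f := fun t => M - b.g t) (a := 0) (by fun_prop) (by
      rintro t ⟨-, ht⟩
      rcases (hm t).lt_or_eq with h | h
      · exact sub_pos.2 h
      · exfalso
        have hl : IsLocalMax b.g t := Filter.Eventually.of_forall fun s => by rw [h]; exact hm s
        obtain ⟨i, k, hk⟩ := mod_node b t hl.deriv_eq_zero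
        have hgi : b.g t = b.g (b.θ i) := by rw [hk]; exact b.periodic_g.int_mul k _
        have : i = m := b.values_distinct i m (by rw [← hgi, h])
        subst this
        have : t - τ = k * (2 * Real.pi) := by linarith
        simp only [Set.mem_ofPred_eq] at ht
        rw [this, Real.cos_int_mul_two_pi] at ht
        linarith)
    refine ⟨m0, h2, fun t ht => ?_⟩
    have e := toIcoMod_add_toIcoDiv_zsmul Real.two_pi_pos 0 t
    rw [zsmul_eq_mul] at e
    have hmm := toIcoMod_mem_Ico Real.two_pi_pos 0 t
    rw [zero_add] at hmm
    generalize toIcoMod Real.two_pi_pos 0 t = s at *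
    have e1 : b.g t = b.g s := by rw [← e]; exact b.periodic_g.int_mul _ _
    rw [e1]
    apply h3 s ⟨⟨hmm.1, hmm.2.le⟩, ?_⟩
    have : t - τ = s - τ + (toIcoDiv Real.two_pi_pos 0 t) * (2 * Real.pi) := by linarith
    rw [this, Real.cos_add_int_mul_two_pi] at ht
    exact ht
  set η := m0 / 4 with hη
  have hη0 : 0 < η := by positivity
  set d : ℝ → ℝ := fun t => M - η + η * Real.cos (t - τ) - b.g t with hd
  have hds : ContDiff ℝ (⊤ : ℕ∞) d := by
    have := b.smooth_g
    have h : ContDiff ℝ (⊤ : ℕ∞) (fun t => M - η + η * Real.cos (t - τ)) := by fun_prop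
    exact h.sub this
  have hdp : Function.Periodic d (2 * Real.pi) := by
    intro t
    have : t + 2 * Real.pi - τ = t - τ + 2 * Real.pi := by ring
    simp only [hd, this, Real.cos_add_two_pi, b.periodic_g t]
  have hdfar : ∀ t, ε ≤ 1 - Real.cos (t - τ) → m0 / 2 ≤ d t := by
    intro t ht
    have a1 := hm0' t ht
    have a2 := Real.neg_one_le_cos (t - τ)
    simp only [hd]
    nlinarith
  set d' : ℝ → ℝ := fun t => - (η * Real.sin (t - τ)) - deriv b.g t with hd'
  have hdd : ∀ t, HasDerivAt d (d' t) t := by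
    intro t
    have h5 := (Real.hasDerivAt_cos (t - τ)).comp t ((hasDerivAt_id t).sub_const τ)
    have h6 := ((h5.const_mul η).const_add (M - η)).sub (hgd t).hasDerivAt
    exact h6.congr_deriv (by simp [hd'])
  obtain ⟨C, hC0, hC⟩ : ∃ C, 0 < C ∧ ∀ t, |d' t| ≤ C := by
    apply periodic_bdd
    · have : d' = deriv d := funext fun t => (hdd t).deriv.symm
      rw [this]
      exact hds.continuous_deriv (by simp)
    · have : d' = deriv d := funext fun t => (hdd t).deriv.symm
      rw [this]
      exact periodic_deriv _ _ hdp
  obtain ⟨k, hk⟩ := exists_nat_gt (C / (η * ε))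
  set N : ℕ := k + 1 with hN
  have hN1 : (1:ℝ) ≤ N := by rw [hN]; push_cast; linarith [Nat.cast_nonneg (α := ℝ) k]
  have hNC : C < N * (η * ε) := by
    rw [div_lt_iff₀ (by positivity)] at hk
    refine hk.trans ?_
    apply mul_lt_mul_of_pos_right _ (by positivity)
    rw [hN]; push_cast; linarith
  set Q : ℝ → ℝ := fun y => PP y ^ N with hQ
  have hQ0 : ∀ y ≤ 1/2, Q y = 0 := fun y hy => by simp [hQ, PP_zero hy, hN]
  have hQ1 : Q 1 = 1 := by simp [hQ, PP_one]
  set f : E2 → ℝ := fun x => M - η + η * (x 0 * Real.cos τ + x 1 * Real.sin τ) -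
    Q (‖x‖^2) * d (Complex.arg (toC x)) with hfdef
  set F : ℝ → ℝ → ℝ := fun r t => M - η + η * (r * Real.cos (t - τ)) - Q (r^2) * d t with hFdef
  have hf : ContDiff ℝ (⊤ : ℕ∞) f := by
    have e1 := polar_smooth Q (PP_smooth.pow N) hQ0 d hds hdp
    have e2 : ContDiff ℝ (⊤ : ℕ∞) (fun x : E2 => M - η + η * (EuclideanSpace.proj (𝕜 := ℝ) (0 : Fin 2) x * Real.cos τ +
      EuclideanSpace.proj (𝕜 := ℝ) (1 : Fin 2) x * Real.sin τ)) := by fun_prop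
    exact e2.sub e1
  have hF : ∀ r t, 0 < r → f (r • sphPt t) = F r t := by
    intro r t hr
    simp only [hfdef, hFdef, arg_smul_sph d hdp r t hr, norm_smul,
      norm_sphPt, Real.norm_eq_abs, mul_one, sq_abs, PiLp.smul_apply, sphPt_zero, sphPt_one,
      smul_eq_mul, Real.cos_sub]
    ring
  set Fr : ℝ → ℝ → ℝ := fun r t => η * Real.cos (t - τ) -
    2 * r * N * Q (r^2) * ((r^2 - 1/2)⁻¹)^2 * d t with hFrdef
  set Ft : ℝ → ℝ → ℝ := fun r t => - (η * r * Real.sin (t - τ)) - Q (r^2) * d' t with hFtdef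
  have hFr : ∀ r t, 0 < r → HasDerivAt (fun r => F r t) (Fr r t) r := by
    intro r t _
    have hr2 : HasDerivAt (fun r : ℝ => r^2) (2 * r) r := by simpa using hasDerivAt_pow 2 r
    have d1 : HasDerivAt (fun r : ℝ => PP (r^2)) (PP (r^2) * ((r^2 - 1/2)⁻¹)^2 * (2 * r)) r :=
      HasDerivAt.comp (h₂ := PP) r (PP_deriv (r^2)) hr2
    have d2 := d1.pow N
    have d3 := ((((hasDerivAt_id r).mul_const (Real.cos (t - τ))).const_mul η).const_add (M - η)).sub
      (d2.mul_const (d t))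
    refine d3.congr_deriv ?_
    simp only [hFrdef, hQ, hN]
    push_cast
    ring
  have hFt : ∀ r t, 0 < r → HasDerivAt (fun t => F r t) (Ft r t) t := by
    intro r t _
    have h5 := (Real.hasDerivAt_cos (t - τ)).comp t ((hasDerivAt_id t).sub_const τ)
    have d3 := (((h5.const_mul r).const_mul η).const_add (M - η)).sub ((hdd t).const_mul (Q (r^2)))
    refine d3.congr_deriv ?_
    simp only [hFtdef]; ring
  have hFr1 : ∀ t, Fr 1 t = η * Real.cos (t - τ) - 8 * N * d t := by
    intro t; simp only [hFrdef, one_pow, hQ1, show ((1:ℝ) - 1/2)⁻¹ = 2 by norm_num]; ring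
  have hFrm : Fr 1 τ = η := by
    rw [hFr1]; simp [hd, hM]
  have hFrN : ∀ i, i ≠ m → Fr 1 (b.θ i) < 0 := by
    intro i hi
    rw [hFr1]
    have a1 := hdfar _ (hfarnode i hi)
    have a2 := Real.cos_le_one (b.θ i - τ)
    have a3 : m0 / 2 ≤ N * d (b.θ i) := by nlinarith
    nlinarith
  obtain ⟨hext, hcrit⟩ := ext_of_polar b f hf F Fr Ft hF hFr hFt
    (by intro t; simp only [hFdef, one_pow, hQ1, hd]; ring)
    (by
      intro i hi
      by_cases h : i = m
      · subst h; rw [hmm, hFrm]; push_cast; linarith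
      · rw [hmx i h hi]; push_cast; linarith [hFrN i h])
    (by
      intro i hi
      have : i ≠ m := by rintro rfl; exact lt_asymm hi hneg
      rw [hmin i hi]; push_cast; linarith [hFrN i this])
  refine ⟨f, hext, ?_⟩
  rw [Set.eq_empty_iff_forall_notMem]
  intro x hx
  rcases hcrit x hx with h | ⟨r, t, hr0, hr1, ht, hxr, e1, e2⟩
  · subst h
    have a1 := radial_hasDerivAt f hf (sphPt τ) 0
    rw [zero_smul, hx.2] at a1
    have a2 : HasDerivAt (fun r : ℝ => f (r • sphPt τ)) η 0 := by
      have a3 : HasDerivAt (fun r : ℝ => M - η + η * r) η 0 := by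
        simpa using ((hasDerivAt_id (0:ℝ)).const_mul η).const_add (M - η)
      apply a3.congr_of_eventuallyEq
      have hc : ContinuousAt (fun r : ℝ => r^2) 0 := by fun_prop
      filter_upwards [hc.eventually (gt_mem_nhds (show (0:ℝ)^2 < 1/2 by norm_num))] with r hr
      have : Q (r^2) = 0 := hQ0 _ hr.le
      have a4 := Real.sin_sq_add_cos_sq τ
      simp only [hfdef, norm_smul,
        norm_sphPt, Real.norm_eq_abs, mul_one, sq_abs, PiLp.smul_apply, sphPt_zero, sphPt_one,
        smul_eq_mul, this]
      linear_combination η * r * a4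
    have := a1.unique a2
    simp only [zero_apply] at this
    linarith
  simp only [hFrdef] at e1
  simp only [hFtdef] at e2
  have hcs := Real.sin_sq_add_cos_sq (t - τ)
  by_cases hy : r^2 ≤ 1/2
  · rw [hQ0 _ hy] at e1 e2
    have c0 : Real.cos (t - τ) = 0 := by
      have : η * Real.cos (t - τ) = 0 := by linarith
      exact (mul_eq_zero.1 this).resolve_left hη0.ne'
    have s0 : Real.sin (t - τ) = 0 := by
      have : η * r * Real.sin (t - τ) = 0 := by linarith
      exact (mul_eq_zero.1 this).resolve_left (by positivity)
    rw [c0, s0] at hcs; norm_num at hcs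
  push Not at hy
  have hy1 : r^2 < 1 := by nlinarith
  have hrr : r^2 < r := by nlinarith
  have hP0 := PP_pos hy
  have hPr : PP (r^2) ≤ r := (PP_le (by positivity) hy1.le).trans hrr.le
  have hQP : Q (r^2) ≤ PP (r^2) := by
    simp only [hQ]
    exact pow_le_of_le_one hP0.le (by linarith) (by omega)
  have hQpos : 0 < Q (r^2) := by simp only [hQ]; positivity
  have hu := inv_ge hy hy1.le
  generalize Q (r^2) = q at *
  generalize (r^2 - 1/2)⁻¹ = u at *
  by_cases hnr : 1 - Real.cos (t - τ) < ε
  · by_cases hs : Real.sin (t - τ) = 0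
    · have hc1 : Real.cos (t - τ) = 1 := by
        have hc0 : 0 < Real.cos (t - τ) := by linarith
        have : (Real.cos (t - τ) - 1) * (Real.cos (t - τ) + 1) = 0 := by
          rw [hs] at hcs; linear_combination hcs
        rcases mul_eq_zero.1 this with h | h <;> linarith
      have hi := b.theta_mem m
      have := (Real.cos_eq_one_iff_of_lt_of_lt (by linarith [hi.2, ht.1]) (by linarith [hi.1, ht.2])).1 hc1
      have htt : t = τ := by linarith
      have : d t = 0 := by rw [htt]; simp [hd, hM]
      rw [this, hc1] at e1
      linarith
    · have a1 := hnear t hnr hs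
      have a2 : -(η * (Real.sin (t - τ))^2 * (r - q)) + q * (deriv b.g t * Real.sin (t - τ)) = 0 := by
        simp only [hd'] at e2
        linear_combination Real.sin (t - τ) * e2
      have a3 : 0 ≤ η * (Real.sin (t - τ))^2 * (r - q) :=
        mul_nonneg (by positivity) (by linarith)
      have a4 := mul_neg_of_pos_of_neg hQpos a1
      linarith
  · push Not at hnr
    have b1 := hdfar t hnr
    have hr2 : 1/2 < r := by linarith
    have b2 : 2 * N * q * m0 ≤ η * Real.cos (t - τ) := by
      have c1 : 4 ≤ u^2 := by
        have := mul_le_mul hu hu (by norm_num) (by linarith)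
        linarith
      have c2 : 1 ≤ 2 * r := by linarith
      have c3 : 4 * (m0 / 2) ≤ u^2 * d t := mul_le_mul c1 b1 (by positivity) (by positivity)
      have c4 : N * q * (4 * (m0/2)) ≤ N * q * (u^2 * d t) := mul_le_mul_of_nonneg_left c3 (by positivity)
      have c5 : N * q * (u^2 * d t) ≤ 2 * r * (N * q * (u^2 * d t)) := by
        apply le_mul_of_one_le_left _ c2
        refine le_trans ?_ c4
        positivity
      linarith
    have b3 : 0 < Real.cos (t - τ) := by
      have : 0 < η * Real.cos (t - τ) := lt_of_lt_of_le (by positivity) b2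
      exact (mul_pos_iff_of_pos_left hη0).1 this
    have b4 : N * q * 8 ≤ 1 := by
      have : 2 * N * q * m0 ≤ m0 / 4 := by
        refine b2.trans ?_
        have := mul_le_mul_of_nonneg_left (Real.cos_le_one (t - τ)) hη0.le
        linarith
      have : (N * q * 8) * m0 ≤ 1 * m0 := by linarith
      exact le_of_mul_le_mul_right this hm0
    have b5 : ε ≤ |Real.sin (t - τ)| := by
      have c0 := mul_nonneg b3.le (show 0 ≤ 1 - Real.cos (t - τ) by linarith)
      have c1 : ε ≤ Real.sin (t - τ)^2 := by linarith
      have c2 := Real.abs_sin_le_one (t - τ)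
      rw [← sq_abs] at c1
      have c3 := mul_nonneg (abs_nonneg (Real.sin (t - τ))) (show 0 ≤ 1 - |Real.sin (t - τ)| by linarith)
      linarith
    have b6 : η * r * |Real.sin (t - τ)| = q * |d' t| := by
      have : η * r * Real.sin (t - τ) = - (q * d' t) := by linarith
      have := congrArg abs this
      rwa [abs_mul (η * r), abs_neg, abs_mul q, abs_of_pos hQpos, abs_of_pos (show 0 < η * r by positivity)] at this
    have b7 : η * (1/2) * ε ≤ q * C := by
      have c1 : q * |d' t| ≤ q * C := mul_le_mul_of_nonneg_left (hC t) hQpos.le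
      have c2 : η * (1/2) * ε ≤ η * r * |Real.sin (t - τ)| :=
        mul_le_mul (mul_le_mul_of_nonneg_left hr2.le hη0.le) b5 h0.le (by positivity)
      linarith
    have b8 : N * (η * (1/2) * ε) ≤ N * (q * C) := mul_le_mul_of_nonneg_left b7 (by positivity)
    have b9 : (N * q * 8) * C ≤ 1 * C := mul_le_mul_of_nonneg_right b4 hC0.le
    linarith


theorem dneg (g : ℝ → ℝ) : deriv (fun t => - g t) = fun t => - deriv g t := by
  funext t; exact deriv.fun_neg

theorem ddneg (g : ℝ → ℝ) (t : ℝ) : deriv (deriv (fun t => - g t)) t = - deriv (deriv g) t := by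
  rw [dneg, deriv.fun_neg]

def negR {n : ℕ} (b : Ribbon n) : Ribbon n where
  g := fun t => - b.g t
  θ := b.θ
  ν := b.ν
  n_even := b.n_even
  n_pos := b.n_pos
  smooth_g := b.smooth_g.neg
  periodic_g := fun t => by simp only [b.periodic_g t]
  theta_mem := b.theta_mem
  theta_mono := b.theta_mono
  node_crit := fun i => by rw [dneg]; simp only [b.node_crit, neg_zero]
  node_nondeg := fun i => by rw [ddneg]; exact neg_ne_zero.2 (b.node_nondeg i)
  crit_only := fun t ht h => b.crit_only t ht (by rw [dneg] at h; exact neg_eq_zero.1 h)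
  values_distinct := fun i j h => b.values_distinct i j (neg_injective h)
  nu_sign := b.nu_sign

theorem negR_negR {n : ℕ} (b : Ribbon n) : negR (negR b) = b := by
  cases b
  simp [negR]

theorem negR_ext {n : ℕ} (b : Ribbon n) (f : E2 → ℝ) (hf : IsExtension b f) :
    IsExtension (negR b) (fun x => - f x) ∧ critPts (fun x => - f x) = critPts f := by
  obtain ⟨h1, h2, h3, h4⟩ := hf
  refine ⟨⟨h1.neg, fun t => by simp only [h2]; rfl, ?_, ?_⟩, ?_⟩
  · intro x hx
    rw [fderiv_fun_neg]
    exact neg_ne_zero.2 (h3 x hx)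
  · intro i
    have e : deriv (deriv (negR b).g) ((negR b).θ i) = - deriv (deriv b.g) (b.θ i) := ddneg _ _
    have e2 : ⟪gradient (fun x => - f x) (sphPt ((negR b).θ i)), sphPt ((negR b).θ i)⟫ =
        - ⟪gradient f (sphPt (b.θ i)), sphPt (b.θ i)⟫ := by
      rw [inner_grad, inner_grad, fderiv_fun_neg]; rfl
    have e3 : (negR b).ν i = b.ν i := rfl
    rw [e, e2, e3]
    obtain ⟨a1, a2⟩ := h4 i
    constructor
    · intro h
      have := a2 (by linarith)
      linarith
    · intro h
      have := a1 (by linarith)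
      linarith
  · ext x
    simp [critPts, fderiv_fun_neg]

theorem gammaR_neg_le {n : ℕ} (b : Ribbon n) : gammaR (negR b) ≤ gammaR b := by
  apply le_sInf
  rintro k ⟨f, hf, rfl⟩
  apply sInf_le
  obtain ⟨h1, h2⟩ := negR_ext b f hf
  exact ⟨_, h1, by rw [h2]⟩

theorem gammaR_neg {n : ℕ} (b : Ribbon n) : gammaR (negR b) = gammaR b := by
  apply le_antisymm (gammaR_neg_le b)
  have := gammaR_neg_le (negR b)
  rwa [negR_negR] at this

def remark {n : ℕ} (a : Ribbon n) (ν : Fin n → ℤ) (hν : ∀ i, ν i = 1 ∨ ν i = -1) : Ribbon n :=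
  { a with ν := ν, nu_sign := hν }

theorem exists_max {n : ℕ} (a : Ribbon n) : ∃ m, ∀ t, a.g t ≤ a.g (a.θ m) := by
  obtain ⟨s, -, hs⟩ := isCompact_Icc.exists_isMaxOn (f := a.g)
    (Set.nonempty_Icc.2 Real.two_pi_pos.le) a.smooth_g.continuous.continuousOn
  have hs' : ∀ t, a.g t ≤ a.g s := by
    intro t
    have e := toIcoMod_add_toIcoDiv_zsmul Real.two_pi_pos 0 t
    rw [zsmul_eq_mul] at e
    have hmm := toIcoMod_mem_Ico Real.two_pi_pos 0 t
    rw [zero_add] at hmm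
    have e1 : a.g t = a.g (toIcoMod Real.two_pi_pos 0 t) := by
      conv_lhs => rw [← e]
      exact a.periodic_g.int_mul _ _
    rw [e1]
    exact hs ⟨hmm.1, hmm.2.le⟩
  have hl : IsLocalMax a.g s := Filter.Eventually.of_forall hs'
  obtain ⟨i, k, hk⟩ := mod_node a s hl.deriv_eq_zero
  refine ⟨i, fun t => (hs' t).trans_eq ?_⟩
  rw [hk]; exact a.periodic_g.int_mul k _

open Classical in
theorem main_zero {n : ℕ} (a : Ribbon n) :
    ∃ b : Ribbon n, b.g = a.g ∧ b.θ = a.θ ∧ gammaR b = 0 := by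
  obtain ⟨m, hm⟩ := exists_max a
  set ν : Fin n → ℤ := fun i => if i ≠ m ∧ deriv (deriv a.g) (a.θ i) < 0 then -1 else 1 with hν
  have hν' : ∀ i, ν i = 1 ∨ ν i = -1 := by
    intro i
    by_cases h : i ≠ m ∧ deriv (deriv a.g) (a.θ i) < 0
    · right; exact if_pos h
    · left; exact if_neg h
  refine ⟨remark a ν hν', rfl, rfl, ?_⟩
  obtain ⟨f, hf, hc⟩ := zero_case (remark a ν hν') m hm
    (fun i hi => if_neg (fun h => lt_asymm hi h.2)) (if_neg (fun h => h.1 rfl))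
    (fun i h1 h2 => if_pos ⟨h1, h2⟩)
  apply le_antisymm _ zero_le
  apply sInf_le
  exact ⟨f, hf, by rw [hc, Set.encard_empty]⟩

open Classical in
theorem main_succ {n : ℕ} (a : Ribbon n) (k : ℕ)
    (hk : k ≤ (Finset.univ.filter fun i => 0 < deriv (deriv a.g) (a.θ i)).card) :
    ∃ b : Ribbon n, b.g = a.g ∧ b.θ = a.θ ∧ gammaR b = ((k + 1 : ℕ) : ℕ∞) := by
  obtain ⟨T, hT, hTk⟩ := Finset.exists_subset_card_eq hk
  set ν : Fin n → ℤ := fun i => if i ∈ T ∨ deriv (deriv a.g) (a.θ i) < 0 then -1 else 1 with hν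
  have hν' : ∀ i, ν i = 1 ∨ ν i = -1 := by
    intro i
    by_cases h : i ∈ T ∨ deriv (deriv a.g) (a.θ i) < 0
    · right; exact if_pos h
    · left; exact if_neg h
  have h1 : ∀ i, deriv (deriv a.g) (a.θ i) < 0 → ν i = -1 := fun i hi => if_pos (Or.inr hi)
  have h2 : ∀ i ∈ T, 0 < deriv (deriv a.g) (a.θ i) ∧ ν i = -1 := fun i hi =>
    ⟨(Finset.mem_filter.1 (hT hi)).2, if_pos (Or.inl hi)⟩
  have h3 : ∀ i, i ∉ T → 0 < deriv (deriv a.g) (a.θ i) → ν i = 1 := fun i hi h =>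
    if_neg (fun hh => hh.elim hi (fun h' => lt_asymm h h'))
  refine ⟨remark a ν hν', rfl, rfl, ?_⟩
  subst hTk
  apply le_antisymm
  · obtain ⟨f, hf, hc⟩ := upper (remark a ν hν') T h1 h2 h3
    exact sInf_le_of_le ⟨f, hf, rfl⟩ hc
  · apply le_sInf
    rintro _ ⟨f, hf, rfl⟩
    exact lower (remark a ν hν') T h1 h2 f hf

/-- Given the boundary function data of a ribbon `a` with `n` nodes, for every integer
`0 ≤ k ≤ n/2 + 1` there exists a marking of the nodes whose resulting ribbon `b` (same `φ`
and the same nodes) satisfies `γ(b) = k`. -/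
theorem stmt_15 (n : ℕ) (a : Ribbon n) (k : ℕ) (hk : k ≤ n / 2 + 1) :
    ∃ b : Ribbon n, b.g = a.g ∧ b.θ = a.θ ∧ gammaR b = (k : ℕ∞) := by
  classical
  rcases k with _ | k
  · simpa using main_zero a
  by_cases hc : k ≤ (Finset.univ.filter fun i => 0 < deriv (deriv a.g) (a.θ i)).card
  · convert main_succ a k (by convert hc)
  · have hcard : (Finset.univ.filter fun i => 0 < deriv (deriv a.g) (a.θ i)).card +
        (Finset.univ.filter fun i => ¬ 0 < deriv (deriv a.g) (a.θ i)).card = n := by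
      rw [Finset.card_filter_add_card_filter_not]; simp
    have hle : (Finset.univ.filter fun i => ¬ 0 < deriv (deriv a.g) (a.θ i)).card ≤
        (Finset.univ.filter fun i => 0 < deriv (deriv (negR a).g) ((negR a).θ i)).card := by
      apply Finset.card_le_card
      intro i hi
      rw [Finset.mem_filter] at hi ⊢
      refine ⟨hi.1, ?_⟩
      have e : deriv (deriv (negR a).g) ((negR a).θ i) = - deriv (deriv a.g) (a.θ i) := ddneg _ _
      rw [e]
      have h1 := lt_of_le_of_ne (not_lt.1 hi.2) (a.node_nondeg i)
      linarith
    have hk' : k ≤ (Finset.univ.filter fun i => 0 < deriv (deriv (negR a).g) ((negR a).θ i)).card := by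
      omega
    obtain ⟨b, hb1, hb2, hb3⟩ := main_succ (negR a) k (by convert hk')
    refine ⟨negR b, ?_, hb2, ?_⟩
    · change (fun t => - b.g t) = a.g
      rw [hb1]
      funext t
      simp [negR]
    · rw [gammaR_neg, hb3]
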